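/- Suppose 0 < 1/n ≪ ε ≪ 1/t, 1/a_1 ≪ γ, 1/k, 1/ℓ with 2 ≤ k ≤ ℓ. Suppose F is an ℓ-vertex k-graph and a ∈ [t]^{k−1}. Suppose H is an n-vertex k-graph satisfying a regularity instance R = (ε, a, d_{a,k}). Then Pr(F, H) = IC(F, d_{a,k}) ± γ. -/

import Mathlib

namespace HypReg

open Finset

attribute [local instance 10] Classical.propDecidable

noncomputable section

variable {V : Type*} [DecidableEq V]

/-- Representation of a 1-graph: the set of singletons of `U`. -/
def sing (U : Finset V) : Finset (Finset V) :=
  U.image fun v => ({v} : Finset V)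

/-- `Kset W j i B`: the i-element subsets of `W` all of whose j-element subsets lie in `B`. -/
def Kset (W : Finset V) (j i : ℕ) (B : Finset (Finset V)) : Finset (Finset V) :=
  (W.powersetCard i).filter fun S => ∀ T ∈ S.powersetCard j, T ∈ B

/-- Clique operator which, at level 1, uses the ambient family `cr` of crossing i-sets. -/
def KsetC (W : Finset V) (cr : Finset (Finset V)) (j i : ℕ) (B : Finset (Finset V)) :
    Finset (Finset V) :=
  if j = 1 then cr.filter fun S => ∀ v ∈ S, ({v} : Finset V) ∈ B
  else Kset W j i B

/-- `A` (a (j+1)-graph) is (ε,d)-regular with respect to the j-graph `B` (plain clique sets). -/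
def RegPair (W : Finset V) (j : ℕ) (ε d : ℝ) (A B : Finset (Finset V)) : Prop :=
  ∀ Q ⊆ B, ε * ((Kset W j (j+1) B).card : ℝ) ≤ ((Kset W j (j+1) Q).card : ℝ) →
    |((A ∩ Kset W j (j+1) Q).card : ℝ) - d * ((Kset W j (j+1) Q).card : ℝ)|
      ≤ ε * ((Kset W j (j+1) Q).card : ℝ)

/-- (ε,d)-regularity with crossing-aware clique sets. -/
def RegPairC (W : Finset V) (cr : Finset (Finset V)) (j : ℕ) (ε d : ℝ)
    (A B : Finset (Finset V)) : Prop :=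
  ∀ Q ⊆ B, ε * ((KsetC W cr j (j+1) B).card : ℝ) ≤ ((KsetC W cr j (j+1) Q).card : ℝ) →
    |((A ∩ KsetC W cr j (j+1) Q).card : ℝ) - d * ((KsetC W cr j (j+1) Q).card : ℝ)|
      ≤ ε * ((KsetC W cr j (j+1) Q).card : ℝ)

/-- Relative density `d(A | B)` of the (j+1)-graph `A` w.r.t. the j-graph `B`. -/
def dens (W : Finset V) (cr : Finset (Finset V)) (j : ℕ) (A B : Finset (Finset V)) : ℝ :=
  if (KsetC W cr j (j+1) B).card = 0 then 0
  else ((A ∩ KsetC W cr j (j+1) B).card : ℝ) / ((KsetC W cr j (j+1) B).card : ℝ)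

/-- `H` is a k-graph on the vertex set `W`. -/
def IsKGraph (W : Finset V) (k : ℕ) (H : Finset (Finset V)) : Prop :=
  ∀ e ∈ H, e ⊆ W ∧ e.card = k

/-- symmetric difference of two hypergraphs -/
def sd (A B : Finset (Finset V)) : Finset (Finset V) := (A \ B) ∪ (B \ A)

/-- A (candidate) family of partitions: the ground set, the class of each vertex and,
for each level `j ≥ 2`, the class of each crossing j-set. -/
structure PartFam (V : Type*) [DecidableEq V] where
  gnd : Finset V
  vClass : V → Finset V
  cls : ℕ → Finset V → Finset (Finset V)

namespace PartFam

variable (F : PartFam V)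

/-- crossing i-sets -/
def cross (i : ℕ) : Finset (Finset V) :=
  (F.gnd.powersetCard i).filter fun S =>
    ∀ u ∈ S, ∀ v ∈ S, u ≠ v → F.vClass u ≠ F.vClass v

/-- the level-j polyad of a vertex set `J` -/
def polyad (j : ℕ) (J : Finset V) : Finset (Finset V) :=
  if j = 1 then sing (J.sup F.vClass) else (J.powersetCard j).sup (F.cls j)

/-- the clique set `K_j(P̂^{(j-1)}(J))` of the (j−1)-polyad of a crossing j-set `J` -/
def polyCliques (j : ℕ) (J : Finset V) : Finset (Finset V) :=
  KsetC F.gnd (F.cross j) (j-1) j (F.polyad (j-1) J)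

/-- `F` is a family of partitions `P(k−1, a)`. -/
def IsFamily (k : ℕ) (a : ℕ → ℕ) : Prop :=
  (∀ v ∈ F.gnd, v ∈ F.vClass v) ∧
  (∀ v ∈ F.gnd, F.vClass v ⊆ F.gnd) ∧
  (∀ u ∈ F.gnd, ∀ v ∈ F.gnd, u ∈ F.vClass v → F.vClass u = F.vClass v) ∧
  (F.gnd.image F.vClass).card = a 1 ∧ k ≤ a 1 ∧
  ∀ j, 2 ≤ j → j ≤ k - 1 →
    (∀ J ∈ F.cross j, J ∈ F.cls j J) ∧
    (∀ J ∈ F.cross j, ∀ I ∈ F.cls j J, F.cls j I = F.cls j J) ∧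
    (∀ J ∈ F.cross j, F.cls j J ⊆ F.polyCliques j J) ∧
    (∀ J ∈ F.cross j, F.polyCliques j J ⊆ F.cross j) ∧
    (∀ J ∈ F.cross j, ((F.polyCliques j J).image (F.cls j)).card = a j)

/-- the regularity condition in the definition of an equitable family of partitions:
all polyad complexes of crossing k-sets are (ε, (1/a_2, …, 1/a_{k−1}))-regular. -/
def PolyadReg (k : ℕ) (a : ℕ → ℕ) (ε : ℝ) : Prop :=
  ∀ K ∈ F.cross k, ∀ j, 2 ≤ j → j ≤ k - 1 → ∀ J ∈ K.powersetCard j,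
    RegPairC F.gnd (F.cross j) (j-1) ε (1 / (a j : ℝ)) (F.polyad j K) (F.polyad (j-1) J)

/-- `(η, ε, a, λ)`-equitable family of partitions -/
def IsEquitable (k : ℕ) (a : ℕ → ℕ) (η ε lam : ℝ) : Prop :=
  1 ≤ η * (a 1 : ℝ) ∧
  (∀ v ∈ F.gnd, |((F.vClass v).card : ℝ) - (F.gnd.card : ℝ) / (a 1 : ℝ)|
      ≤ lam * (F.gnd.card : ℝ) / (a 1 : ℝ)) ∧
  F.PolyadReg k a ε

/-- `(η, ε, a)`-equitable family of partitions (classes of size ⌊n/a₁⌋ or ⌊n/a₁⌋+1) -/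
def IsEquitableE (k : ℕ) (a : ℕ → ℕ) (η ε : ℝ) : Prop :=
  1 ≤ η * (a 1 : ℝ) ∧
  (∀ v ∈ F.gnd, (F.vClass v).card = F.gnd.card / a 1 ∨
      (F.vClass v).card = F.gnd.card / a 1 + 1) ∧
  F.PolyadReg k a ε

/-- `G` is perfectly ε-regular with respect to `F`. -/
def PerfectlyRegular (k : ℕ) (ε : ℝ) (G : Finset (Finset V)) : Prop :=
  ∀ K ∈ F.cross k, ∃ d : ℝ, 0 ≤ d ∧
    RegPairC F.gnd (F.cross k) (k-1) ε d G (F.polyad (k-1) K)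

end PartFam

/-- `a` is a T-bounded vector of length k−1. -/
def BoundedVec (k T : ℕ) (a : ℕ → ℕ) : Prop := ∀ j, 1 ≤ j → j ≤ k - 1 → a j ≤ T

/-- level-j refinement `F^{(j)} ≺ P^{(j)}` between two families of partitions -/
def RefinesAt (F P : PartFam V) (j : ℕ) : Prop :=
  if j = 1 then ∀ v ∈ F.gnd, F.vClass v ⊆ P.vClass v
  else ∀ I ∈ F.cross j,
    (∃ J ∈ P.cross j, F.cls j I ⊆ P.cls j J) ∨ ∀ S ∈ F.cls j I, S ∉ P.cross j

/-- level-j approximate refinement `F^{(j)} ≺_ν P^{(j)}` -/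
def RefinesApproxAt (F P : PartFam V) (j : ℕ) (ν : ℝ) : Prop :=
  if j = 1 then
    ∃ f : Finset V → Finset V,
      (∀ v ∈ F.gnd, f (F.vClass v) ∈ F.gnd.image P.vClass) ∧
      ∑ C ∈ F.gnd.image F.vClass, ((C \ f C).card : ℝ) ≤ ν * (F.gnd.card : ℝ)
  else
    ∃ f : Finset (Finset V) → Finset (Finset V),
      (∀ I ∈ F.cross j,
        f (F.cls j I) ∈ ((P.cross j).image (P.cls j)) ∪ {F.cross j \ P.cross j}) ∧
      ∑ C ∈ (F.cross j).image (F.cls j), ((C \ f C).card : ℝ) ≤ ν * ((F.cross j).card : ℝ)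

/-- The address space: a base set (of class indices) together with a labelling of its subsets. -/
abbrev Addr := Finset ℕ × (Finset ℕ → ℕ)

/-- `x` is an element of the address space `Â(l, j, a)`. -/
def IsAddress (l j : ℕ) (a : ℕ → ℕ) (x : Addr) : Prop :=
  x.1.card = l ∧ (∀ i ∈ x.1, 1 ≤ i ∧ i ≤ a 1) ∧
  (∀ L : Finset ℕ, L ⊆ x.1 → 2 ≤ L.card → L.card ≤ j → 1 ≤ x.2 L ∧ x.2 L ≤ a L.card) ∧
  (∀ L : Finset ℕ, ¬(L ⊆ x.1 ∧ 2 ≤ L.card ∧ L.card ≤ j) → x.2 L = 0)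

/-- restriction `ŷ ≤ x̂` of an address to the base `B`, keeping levels up to `j`. -/
def restrictA (x : Addr) (j : ℕ) (B : Finset ℕ) : Addr :=
  (B, fun L => if L ⊆ B ∧ 2 ≤ L.card ∧ L.card ≤ j then x.2 L else 0)

/-- `d` is a density function of `Â(k, k−1, a)`. -/
def DensityFun (k : ℕ) (a : ℕ → ℕ) (d : Addr → ℝ) : Prop :=
  ∀ x : Addr, IsAddress k (k-1) a x → 0 ≤ d x ∧ d x ≤ 1

/-- A family of partitions together with an `a`-labelling. -/
structure LabFam (V : Type*) [DecidableEq V] extends PartFam V where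
  vIdx : V → ℕ
  lbl : ℕ → Finset V → ℕ

namespace LabFam

variable (F : LabFam V)

/-- `F` is a family of partitions with a legitimate `a`-labelling. -/
def IsLabeled (k : ℕ) (a : ℕ → ℕ) : Prop :=
  F.toPartFam.IsFamily k a ∧
  (∀ v ∈ F.gnd, 1 ≤ F.vIdx v ∧ F.vIdx v ≤ a 1) ∧
  (∀ u ∈ F.gnd, ∀ v ∈ F.gnd, (F.vIdx u = F.vIdx v ↔ F.vClass u = F.vClass v)) ∧
  ∀ j, 2 ≤ j → j ≤ k - 1 →
    (∀ I ∈ F.toPartFam.cross j, 1 ≤ F.lbl j I ∧ F.lbl j I ≤ a j) ∧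
    (∀ I ∈ F.toPartFam.cross j, ∀ I' ∈ F.cls j I, F.lbl j I' = F.lbl j I) ∧
    (∀ I ∈ F.toPartFam.cross j, ∀ I' ∈ F.toPartFam.cross j,
      F.toPartFam.polyad (j-1) I = F.toPartFam.polyad (j-1) I' →
      F.lbl j I = F.lbl j I' → F.cls j I = F.cls j I')

/-- the address `x̂(L)` (up to level j) of a crossing set `L` -/
def addrOf (j : ℕ) (L : Finset V) : Addr :=
  (L.image F.vIdx,
   fun M => if M ⊆ L.image F.vIdx ∧ 2 ≤ M.card ∧ M.card ≤ j
     then F.lbl M.card (L.filter fun v => F.vIdx v ∈ M) else 0)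

/-- the part `P^{(j)}(x̂, b)` -/
def partAt (j : ℕ) (x : Addr) (b : ℕ) : Finset (Finset V) :=
  if j ≤ 1 then (if x.1 = {b} then sing (F.gnd.filter fun v => F.vIdx v = b) else ∅)
  else (F.toPartFam.cross j).filter fun I => F.addrOf (j-1) I = x ∧ F.lbl j I = b

/-- the polyad `P̂^{(j)}(x̂)` -/
def polyAt (j : ℕ) (x : Addr) : Finset (Finset V) :=
  if j = 1 then sing (F.gnd.filter fun v => F.vIdx v ∈ x.1)
  else (x.1.powersetCard j).sup fun B => F.partAt j (restrictA x (j-1) B) (x.2 B)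

/-- `F` is an `(ε, d)`-partition of `H`. -/
def IsDensPartition (k : ℕ) (a : ℕ → ℕ) (ε : ℝ) (d : Addr → ℝ)
    (H : Finset (Finset V)) : Prop :=
  ∀ x : Addr, IsAddress k (k-1) a x →
    RegPairC F.gnd (F.toPartFam.cross k) (k-1) ε (d x) H (F.polyAt (k-1) x)

/-- `F` is an `(ε, a, d)`-equitable partition of `H`. -/
def IsEquitPartition (k : ℕ) (a : ℕ → ℕ) (ε : ℝ) (d : Addr → ℝ)
    (H : Finset (Finset V)) : Prop :=
  F.IsLabeled k a ∧ F.toPartFam.IsEquitableE k a (1 / (a 1 : ℝ)) ε ∧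
  F.IsDensPartition k a ε d H

end LabFam

/-- An ℓ-partite complex: vertex classes and, for each level, a partite graph. -/
structure Cx (V : Type*) [DecidableEq V] (l : ℕ) where
  C : Fin l → Finset V
  G : ℕ → Finset (Finset V)

namespace Cx

variable {l : ℕ} (X : Cx V l)

def gnd : Finset V := Finset.univ.sup X.C

/-- crossing i-sets with respect to the classes of `X` -/
def cross (i : ℕ) : Finset (Finset V) :=
  (X.gnd.powersetCard i).filter fun S => ∀ t : Fin l, (S ∩ X.C t).card ≤ 1

/-- restriction of the level-j graph to the classes indexed by `L` -/
def restr (j : ℕ) (L : Finset (Fin l)) : Finset (Finset V) :=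
  if j = 1 then sing (L.sup X.C) else (X.G j).filter fun e => e ⊆ L.sup X.C

/-- `X` is a complex with levels up to `k`. -/
def IsComplex (k : ℕ) : Prop :=
  (∀ s t : Fin l, s ≠ t → Disjoint (X.C s) (X.C t)) ∧
  (∀ j, 2 ≤ j → j ≤ k → X.G j ⊆ X.cross j) ∧
  (∀ j, 3 ≤ j → j ≤ k → X.G j ⊆ Kset X.gnd (j-1) j (X.G (j-1)))

/-- `X` is an (ε, (d_2, …, d_k))-regular complex. -/
def IsRegular (k : ℕ) (ε : ℝ) (d : ℕ → ℝ) : Prop :=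
  ∀ j, 2 ≤ j → j ≤ k → ∀ L ∈ (Finset.univ : Finset (Fin l)).powersetCard j,
    RegPairC X.gnd (X.cross j) (j-1) ε (d j) (X.G j) (X.restr (j-1) L)

/-- The restricted complex `X[L]` is (ε, (d_2, …, d_{k−1}, p))-regular. -/
def RestrRegular (k : ℕ) (ε : ℝ) (d : ℕ → ℝ) (L : Finset (Fin l)) (p : ℝ) : Prop :=
  ∀ j, 2 ≤ j → j ≤ k → ∀ L' ∈ L.powersetCard j,
    RegPairC X.gnd (X.cross j) (j-1) ε (if j = k then p else d j)
      (X.restr j L) (X.restr (j-1) L')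

/-- clique set `K_i` of the level-j graph of the complex (level 1: crossing sets). -/
def KsetLvl (j i : ℕ) : Finset (Finset V) :=
  if j ≤ 1 then X.cross i else Kset X.gnd j i (X.G j)

end Cx

/-- `eCL`, `mCL` satisfy the counting lemma of Kohayakawa–Rödl–Skokan. -/
def CountingProp (eCL : ℝ → ℝ → ℕ → ℕ → ℝ) (mCL : ℝ → ℝ → ℕ → ℕ → ℕ) : Prop :=
  ∀ γ d₀ : ℝ, 0 < γ → 0 < d₀ → ∀ k l : ℕ, 2 ≤ k → k ≤ l →
    (0 < eCL γ d₀ k l ∧ eCL γ d₀ k l ≤ 1) ∧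
    ∀ (V₀ : Type) [DecidableEq V₀], ∀ (X : Cx V₀ l) (m : ℕ) (lam ε : ℝ) (d : ℕ → ℝ),
      0 ≤ lam → lam < 1/4 → 0 < ε → ε ≤ eCL γ d₀ k l → mCL γ d₀ k l ≤ m →
      (∀ j, 2 ≤ j → j ≤ k → d₀ ≤ d j) →
      X.IsComplex k →
      (∀ i, |((X.C i).card : ℝ) - (m : ℝ)| ≤ lam * m) →
      X.IsRegular k ε d →
      |((Kset X.gnd k l (X.G k)).card : ℝ) -
        (∏ j ∈ Finset.Icc 2 k, d j ^ (l.choose j)) * ∏ i, ((X.C i).card : ℝ)|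
        ≤ γ * ((∏ j ∈ Finset.Icc 2 k, d j ^ (l.choose j)) * ∏ i, ((X.C i).card : ℝ))

/-- `eRI` is a legitimate function for defining regularity instances. -/
def GoodERI (eRI : ℕ → ℕ → ℝ) : Prop :=
  (∀ t k : ℕ, 1 ≤ t → 2 ≤ k → 0 < eRI t k ∧ eRI t k ≤ 1) ∧
  (∀ k t t' : ℕ, 1 ≤ t → t ≤ t' → eRI t' k ≤ eRI t k) ∧
  (∀ t k k' : ℕ, 2 ≤ k → k ≤ k' → eRI t k' ≤ eRI t k) ∧
  (∀ k : ℕ, Filter.Tendsto (fun t => eRI t k) Filter.atTop (nhds 0)) ∧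
  ∃ (eCL : ℝ → ℝ → ℕ → ℕ → ℝ) (mCL : ℝ → ℝ → ℕ → ℕ → ℕ),
    CountingProp eCL mCL ∧
    ∀ t k : ℕ, 1 ≤ t → 2 ≤ k →
      eRI t k < eCL (1/(t:ℝ)) (1/(t:ℝ)) (k-1) k / (4 * (t:ℝ) ^ (4^k))

/-- `max_i a_i` over `i ∈ [k−1]` -/
def maxA (k : ℕ) (a : ℕ → ℕ) : ℕ := (Finset.Icc 1 (k-1)).sup a

/-- `(ε, a, d)` is a regularity instance. -/
def RegInstance (eRI : ℕ → ℕ → ℝ) (k : ℕ) (ε : ℝ) (a : ℕ → ℕ) (d : Addr → ℝ) : Prop :=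
  2 ≤ k ∧ (∀ j, 1 ≤ j → j ≤ k - 1 → 1 ≤ a j) ∧ 0 < ε ∧
  ε ≤ eRI (maxA k a) k ∧ DensityFun k a d

section Counting

variable {W : Type} [Fintype W] [DecidableEq W]

/-- `S` spans an induced copy of `Fg` in `H` (both k-graphs). -/
def InducedCopy (Fg : Finset (Finset W)) (H : Finset (Finset V)) (k : ℕ) (S : Finset V) :
    Prop :=
  ∃ e : W → V, Function.Injective e ∧ Finset.univ.image e = S ∧
    ∀ A : Finset W, A.card = k → (A.image e ∈ H ↔ A ∈ Fg)

/-- the size of the automorphism group of `Fg` -/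
def AutCount (Fg : Finset (Finset W)) : ℕ :=
  Nat.card {π : W ≃ W // ∀ A : Finset W, A.image π ∈ Fg ↔ A ∈ Fg}

/-- the number `IC_σ(F, H)` of σ-induced copies of `Fg` in the complex `X` -/
def ICosig {l : ℕ} (X : Cx V l) (k : ℕ) (Fg : Finset (Finset W)) (σ : W ≃ Fin l) : ℕ :=
  Set.ncard {e : W → V |
    (∀ v, e v ∈ X.C (σ v)) ∧
    Finset.univ.image e ∈ X.KsetLvl (k-1) l ∧
    ∀ A : Finset W, A.card = k → (A.image e ∈ X.G k ↔ A ∈ Fg)}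

/-- `IC(F, d, x̂, σ)` -/
def ICs (Fg : Finset (Finset W)) (k l : ℕ) (a : ℕ → ℕ) (d : Addr → ℝ)
    (x : Addr) (σ : W → ℕ) : ℝ :=
  (∏ B ∈ x.1.powersetCard k,
    if ∃ A ∈ Fg, A.image σ = B then d (restrictA x (k-1) B)
    else 1 - d (restrictA x (k-1) B)) *
  ∏ j ∈ Finset.Icc 2 (k-1), ((a j : ℝ) ^ (l.choose j))⁻¹

/-- `IC(F, d, x̂)` -/
def ICa (Fg : Finset (Finset W)) (k l : ℕ) (a : ℕ → ℕ) (d : Addr → ℝ) (x : Addr) : ℝ :=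
  (AutCount Fg : ℝ)⁻¹ *
    ∑ᶠ σ ∈ {σ : W → ℕ | Set.BijOn σ Set.univ ↑x.1}, ICs Fg k l a d x σ

/-- `IC(F, d)` -/
def IC (Fg : Finset (Finset W)) (k l : ℕ) (a : ℕ → ℕ) (d : Addr → ℝ) : ℝ :=
  (((a 1).choose l : ℝ))⁻¹ * ∑ᶠ x ∈ {x : Addr | IsAddress l (k-1) a x}, ICa Fg k l a d x

end Counting

end

end HypReg
namespace HypReg

open Finset

attribute [local instance 10] Classical.propDecidable

section Addresses

variable {V : Type*} [DecidableEq V] {F : LabFam V} {k : ℕ} {a : ℕ → ℕ}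

lemma LabFam.IsLabeled.mem_cross_iff (h : F.IsLabeled k a) {i : ℕ} {T : Finset V} :
    T ∈ F.toPartFam.cross i ↔ T ⊆ F.gnd ∧ T.card = i ∧ Set.InjOn F.vIdx T := by
  simp only [PartFam.cross, mem_filter, mem_powersetCard, and_assoc]
  refine and_congr_right fun hT => and_congr_right fun _ => ⟨?_, ?_⟩
  · intro hc u hu v hv huv
    by_contra hne
    exact hc u hu v hv hne ((h.2.2.1 u (hT hu) v (hT hv)).1 huv)
  · intro hi u hu v hv hne hc
    exact hne (hi hu hv ((h.2.2.1 u (hT hu) v (hT hv)).2 hc))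

/-- Passing to a subset of a crossing set restricts its address. -/
lemma addrOf_subset {T M : Finset V} (hT : Set.InjOn F.vIdx T) (hM : M ⊆ T) {i j : ℕ}
    (hij : i ≤ j) :
    F.addrOf i M = restrictA (F.addrOf j T) i (M.image F.vIdx) := by
  refine Prod.ext rfl (funext fun L => ?_)
  simp only [LabFam.addrOf, restrictA]
  by_cases hL : L ⊆ M.image F.vIdx ∧ 2 ≤ L.card ∧ L.card ≤ i
  · rw [if_pos hL, if_pos hL,
      if_pos ⟨hL.1.trans (image_subset_image hM), hL.2.1, hL.2.2.trans hij⟩]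
    congr 1
    ext v
    simp only [mem_filter]
    refine ⟨fun hv => ⟨hM hv.1, hv.2⟩, fun hv => ⟨?_, hv.2⟩⟩
    obtain ⟨w, hw, hwv⟩ := mem_image.1 (hL.1 hv.2)
    rwa [← hT (hM hw) hv.1 hwv]
  · rw [if_neg hL, if_neg hL]

lemma addrOf_of_le {T T' : Finset V} {i j : ℕ} (hij : i ≤ j)
    (h : F.addrOf j T = F.addrOf j T') : F.addrOf i T = F.addrOf i T' := by
  have h1 : T.image F.vIdx = T'.image F.vIdx := congrArg Prod.fst h
  refine Prod.ext h1 (funext fun L => ?_)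
  have h2 := congrFun (congrArg Prod.snd h) L
  simp only [LabFam.addrOf, h1] at h2 ⊢
  by_cases hL : L ⊆ T'.image F.vIdx ∧ 2 ≤ L.card ∧ L.card ≤ i
  · rw [if_pos hL, if_pos hL]
    have hL' : L ⊆ T'.image F.vIdx ∧ 2 ≤ L.card ∧ L.card ≤ j := ⟨hL.1, hL.2.1, hL.2.2.trans hij⟩
    rwa [if_pos hL', if_pos hL'] at h2
  · rw [if_neg hL, if_neg hL]

lemma filter_vIdx_image (T : Finset V) : (T.filter fun v => F.vIdx v ∈ T.image F.vIdx) = T :=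
  filter_true_of_mem fun _ hv => mem_image_of_mem _ hv

lemma LabFam.IsLabeled.addrOf_eq_iff (h : F.IsLabeled k a) {i : ℕ} (hi : 2 ≤ i) {T T' : Finset V}
    (hT : T ∈ F.toPartFam.cross i) (hT' : T' ∈ F.toPartFam.cross i) :
    F.addrOf i T = F.addrOf i T' ↔
      F.addrOf (i - 1) T = F.addrOf (i - 1) T' ∧ F.lbl i T = F.lbl i T' := by
  have hT := h.mem_cross_iff.1 hT
  have hT' := h.mem_cross_iff.1 hT'
  have c1 : (T.image F.vIdx).card = i := by rw [card_image_of_injOn hT.2.2, hT.2.1]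
  constructor
  · intro he
    refine ⟨addrOf_of_le (Nat.sub_le _ _) he, ?_⟩
    have h1 : T.image F.vIdx = T'.image F.vIdx := congrArg Prod.fst he
    have h2 := congrFun (congrArg Prod.snd he) (T.image F.vIdx)
    simp only [LabFam.addrOf] at h2
    rw [if_pos ⟨Subset.rfl, by omega, by omega⟩, if_pos ⟨h1.subset, by omega, by omega⟩,
      filter_vIdx_image, h1, filter_vIdx_image, ← h1, c1] at h2
    exact h2
  · rintro ⟨he, hl⟩
    have h1 : T.image F.vIdx = T'.image F.vIdx := congrArg Prod.fst he
    refine Prod.ext h1 (funext fun L => ?_)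
    have h2 := congrFun (congrArg Prod.snd he) L
    simp only [LabFam.addrOf] at h2 ⊢
    by_cases hL : L = T.image F.vIdx
    · subst hL
      rw [if_pos ⟨Subset.rfl, by omega, by omega⟩, if_pos ⟨h1.subset, by omega, by omega⟩,
        filter_vIdx_image, h1, filter_vIdx_image, ← h1, c1, hl]
    · have key : ∀ S : Finset ℕ, S = T.image F.vIdx →
          ((L ⊆ S ∧ 2 ≤ L.card ∧ L.card ≤ i) ↔ (L ⊆ S ∧ 2 ≤ L.card ∧ L.card ≤ i - 1)) := by
        rintro S rfl
        refine and_congr_right fun hs => and_congr_right fun _ => ⟨fun hc => ?_, fun hc => by omega⟩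
        have := card_lt_card (hs.ssubset_of_ne hL)
        omega
      simp only [key _ rfl, key _ h1.symm]
      exact h2

lemma LabFam.IsLabeled.subset_cross (h : F.IsLabeled k a) {i : ℕ} {T M : Finset V}
    (hT : T ∈ F.toPartFam.cross i) (hM : M ⊆ T) : M ∈ F.toPartFam.cross M.card := by
  have hT := h.mem_cross_iff.1 hT
  exact h.mem_cross_iff.2 ⟨hM.trans hT.1, rfl, hT.2.2.mono hM⟩

lemma LabFam.IsLabeled.sup_vClass (h : F.IsLabeled k a) {T : Finset V} (hT : T ⊆ F.gnd) :
    T.sup F.vClass = F.gnd.filter fun v => F.vIdx v ∈ T.image F.vIdx := by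
  ext v
  simp only [mem_sup, mem_filter, mem_image]
  constructor
  · rintro ⟨w, hw, hv⟩
    have hvg := h.1.2.1 w (hT hw) hv
    exact ⟨hvg, w, hw,
      ((h.2.2.1 v hvg w (hT hw)).2 (h.1.2.2.1 v hvg w (hT hw) hv)).symm⟩
  · rintro ⟨hvg, w, hw, hwv⟩
    refine ⟨w, hw, ?_⟩
    rw [(h.2.2.1 w (hT hw) v hvg).1 hwv]
    exact h.1.1 v hvg

/-- If level-`j` classes are determined by addresses, then so are level-`j` polyads. -/
lemma LabFam.IsLabeled.polyad_eq_aux (h : F.IsLabeled k a) {i j : ℕ}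
    (hc : 2 ≤ j → ∀ T ∈ F.toPartFam.cross j, ∀ T' ∈ F.toPartFam.cross j,
      F.addrOf j T = F.addrOf j T' → F.cls j T = F.cls j T')
    (hj : 1 ≤ j) {T T' : Finset V}
    (hT : T ∈ F.toPartFam.cross i) (hT' : T' ∈ F.toPartFam.cross i)
    (he : F.addrOf j T = F.addrOf j T') :
    F.toPartFam.polyad j T = F.toPartFam.polyad j T' := by
  have h1 : T.image F.vIdx = T'.image F.vIdx := congrArg Prod.fst he
  by_cases hj1 : j = 1
  · simp only [PartFam.polyad, if_pos hj1]
    rw [h.sup_vClass (h.mem_cross_iff.1 hT).1, h.sup_vClass (h.mem_cross_iff.1 hT').1, h1]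
  · simp only [PartFam.polyad, if_neg hj1]
    have main : ∀ T T' : Finset V, T ∈ F.toPartFam.cross i → T' ∈ F.toPartFam.cross i →
        F.addrOf j T = F.addrOf j T' →
        (T.powersetCard j).sup (F.cls j) ≤ (T'.powersetCard j).sup (F.cls j) := by
      clear h1 he hT hT' T T'
      intro T T' hT hT' he
      have h1 : T.image F.vIdx = T'.image F.vIdx := congrArg Prod.fst he
      refine Finset.sup_le fun M hM => ?_
      obtain ⟨hMT, hMc⟩ := mem_powersetCard.1 hM
      have iT := (h.mem_cross_iff.1 hT).2.2
      have iT' := (h.mem_cross_iff.1 hT').2.2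
      set N := T'.filter fun v => F.vIdx v ∈ M.image F.vIdx with hN
      have hNT : N ⊆ T' := filter_subset _ _
      have him : N.image F.vIdx = M.image F.vIdx := by
        ext b
        simp only [hN, mem_image, mem_filter]
        constructor
        · rintro ⟨v, ⟨_, hv⟩, rfl⟩
          exact hv
        · rintro ⟨v, hv, rfl⟩
          have : F.vIdx v ∈ T'.image F.vIdx := h1 ▸ mem_image_of_mem _ (hMT hv)
          obtain ⟨w, hw, hwv⟩ := mem_image.1 this
          exact ⟨w, ⟨hw, v, hv, hwv.symm⟩, hwv⟩
      have hNc : N.card = j := by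
        rw [← hMc, ← card_image_of_injOn (iT.mono hMT), ← him,
          card_image_of_injOn (iT'.mono hNT)]
      have : F.cls j M = F.cls j N := by
        refine hc (by omega) M (hMc ▸ h.subset_cross hT hMT) N
          (hNc ▸ h.subset_cross hT' hNT) ?_
        rw [addrOf_subset iT hMT le_rfl, addrOf_subset iT' hNT le_rfl, him, he]
      rw [this]
      exact Finset.le_sup (f := F.cls j) (mem_powersetCard.2 ⟨hNT, hNc⟩)
    exact le_antisymm (main T T' hT hT' he) (main T' T hT' hT he.symm)

/-- Two crossing sets with the same address lie in the same class. -/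
lemma LabFam.IsLabeled.cls_eq_of_addrOf_eq (h : F.IsLabeled k a) :
    ∀ i, 2 ≤ i → i ≤ k - 1 → ∀ T ∈ F.toPartFam.cross i, ∀ T' ∈ F.toPartFam.cross i,
      F.addrOf i T = F.addrOf i T' → F.cls i T = F.cls i T' := by
  intro i
  induction i with
  | zero => intro hi; omega
  | succ i ih =>
    intro hi hik T hT T' hT' he
    obtain ⟨he', hl⟩ := (h.addrOf_eq_iff hi hT hT').1 he
    refine (h.2.2.2 (i + 1) hi hik).2.2 T hT T' hT' ?_ hl
    exact h.polyad_eq_aux (fun h2 => ih h2 (by omega)) (by omega) hT hT' he'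

lemma LabFam.IsLabeled.polyad_eq (h : F.IsLabeled k a) {i j : ℕ}
    (hj : 1 ≤ j) (hjk : j ≤ k - 1) {T T' : Finset V}
    (hT : T ∈ F.toPartFam.cross i) (hT' : T' ∈ F.toPartFam.cross i)
    (he : F.addrOf j T = F.addrOf j T') :
    F.toPartFam.polyad j T = F.toPartFam.polyad j T' :=
  h.polyad_eq_aux (fun h2 => h.cls_eq_of_addrOf_eq j h2 hjk) hj hT hT' he

lemma addrOf_one (T : Finset V) : F.addrOf 1 T = (T.image F.vIdx, fun _ => 0) := by
  refine Prod.ext rfl (funext fun L => ?_)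
  simp only [LabFam.addrOf]
  rw [if_neg]
  omega

/-- All sets in the clique set of a polyad have the same address below the top level. -/
lemma LabFam.IsLabeled.addrOf_eq_of_mem_polyCliques (h : F.IsLabeled k a) :
    ∀ j, 2 ≤ j → j ≤ k - 1 → ∀ T ∈ F.toPartFam.cross j, ∀ T' ∈ F.toPartFam.polyCliques j T,
      F.addrOf (j - 1) T' = F.addrOf (j - 1) T := by
  intro j
  induction j with
  | zero => intro hi; omega
  | succ j ih =>
    intro hj hjk T hT T' hT'
    have hT'c := (h.1.2.2.2.2.2 (j + 1) hj hjk).2.2.2.1 T hT hT'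
    have dT := h.mem_cross_iff.1 hT
    have dT' := h.mem_cross_iff.1 hT'c
    have himg : T'.image F.vIdx ⊆ T.image F.vIdx → T'.image F.vIdx = T.image F.vIdx := by
      intro hs
      refine eq_of_subset_of_card_le hs ?_
      rw [card_image_of_injOn dT.2.2, card_image_of_injOn dT'.2.2, dT.2.1, dT'.2.1]
    simp only [Nat.add_sub_cancel, PartFam.polyCliques, KsetC] at hT' ⊢
    by_cases hj1 : j = 1
    · subst hj1
      simp only [if_true, mem_filter, PartFam.polyad, sing, mem_image, singleton_inj,
        exists_eq_right, h.sup_vClass dT.1] at hT'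
      rw [addrOf_one, addrOf_one, himg]
      intro b hb
      obtain ⟨v, hv, rfl⟩ := mem_image.1 hb
      obtain ⟨w, hw, e⟩ := (hT'.2 v hv).2
      exact e ▸ mem_image_of_mem _ hw
    · simp only [if_neg hj1, Kset, mem_filter, PartFam.polyad, mem_sup] at hT'
      have hsub : ∀ M ⊆ T', M.card = j → ∃ N ⊆ T, F.addrOf j M = F.addrOf j N := by
        intro M hM hMc
        obtain ⟨N, hN, hMN⟩ := hT'.2 M (mem_powersetCard.2 ⟨hM, hMc⟩)
        obtain ⟨hNT, hNc⟩ := mem_powersetCard.1 hN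
        refine ⟨N, hNT, ?_⟩
        have cM : M ∈ F.toPartFam.cross j := hMc ▸ h.subset_cross hT'c hM
        have cN : N ∈ F.toPartFam.cross j := hNc ▸ h.subset_cross hT hNT
        refine (h.addrOf_eq_iff (by omega) cM cN).2 ⟨?_, ?_⟩
        · exact ih (by omega) (by omega) N cN M
            ((h.1.2.2.2.2.2 j (by omega) (by omega)).2.2.1 N cN hMN)
        · exact (h.2.2.2 j (by omega) (by omega)).2.1 N cN M hMN
      have hi : T'.image F.vIdx = T.image F.vIdx := by
        refine himg fun b hb => ?_
        obtain ⟨v, hv, rfl⟩ := mem_image.1 hb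
        obtain ⟨M, hvM, hMT, hMc⟩ := exists_subsuperset_card_eq (n := j)
          (singleton_subset_iff.2 hv) (by simp; omega) (by omega)
        obtain ⟨N, hN, he⟩ := hsub M hMT hMc
        have h1 : M.image F.vIdx = N.image F.vIdx := congrArg Prod.fst he
        exact image_subset_image hN
          (h1 ▸ mem_image_of_mem _ (singleton_subset_iff.1 hvM))
      refine Prod.ext hi (funext fun L => ?_)
      by_cases hL : L ⊆ T'.image F.vIdx ∧ 2 ≤ L.card ∧ L.card ≤ j
      · have hcard : (T'.filter fun v => F.vIdx v ∈ L).card ≤ j := by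
          rw [← card_image_of_injOn (dT'.2.2.mono (filter_subset _ _))]
          refine le_trans (card_le_card ?_) hL.2.2
          intro b hb
          obtain ⟨v, hv, rfl⟩ := mem_image.1 hb
          exact (mem_filter.1 hv).2
        obtain ⟨M, hLM, hMT, hMc⟩ := exists_subsuperset_card_eq (n := j)
          (filter_subset (fun v => F.vIdx v ∈ L) T') hcard (by omega)
        obtain ⟨N, hN, he⟩ := hsub M hMT hMc
        have hLM' : L ⊆ M.image F.vIdx := by
          intro b hb
          obtain ⟨v, hv, rfl⟩ := mem_image.1 (hL.1 hb)
          exact mem_image_of_mem _ (hLM (mem_filter.2 ⟨hv, hb⟩))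
        have h1 : M.image F.vIdx = N.image F.vIdx := congrArg Prod.fst he
        rw [addrOf_subset dT'.2.2 hMT le_rfl, addrOf_subset dT.2.2 hN le_rfl] at he
        have h2 := congrFun (congrArg Prod.snd he) L
        simp only [restrictA] at h2
        rwa [if_pos ⟨hLM', hL.2⟩, if_pos ⟨h1 ▸ hLM', hL.2⟩] at h2
      · have hL' : ¬ (L ⊆ T.image F.vIdx ∧ 2 ≤ L.card ∧ L.card ≤ j) := hi ▸ hL
        simp only [LabFam.addrOf]
        rw [if_neg hL, if_neg hL']

lemma LabFam.IsLabeled.mem_cls_iff (h : F.IsLabeled k a) {i : ℕ} (hi : 2 ≤ i) (hik : i ≤ k - 1)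
    {T T' : Finset V} (hT : T ∈ F.toPartFam.cross i) (hT' : T' ∈ F.toPartFam.cross i) :
    T ∈ F.cls i T' ↔ F.addrOf i T = F.addrOf i T' := by
  constructor
  · intro hm
    refine (h.addrOf_eq_iff hi hT hT').2 ⟨?_, ?_⟩
    · exact h.addrOf_eq_of_mem_polyCliques i hi hik T' hT' T
        ((h.1.2.2.2.2.2 i hi hik).2.2.1 T' hT' hm)
    · exact (h.2.2.2 i hi hik).2.1 T' hT' T hm
  · intro he
    rw [← h.cls_eq_of_addrOf_eq i hi hik T hT T' hT' he]
    exact (h.1.2.2.2.2.2 i hi hik).1 T hT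

/-- Within every polyad, every label occurs. -/
lemma LabFam.IsLabeled.exists_lbl (h : F.IsLabeled k a) {j : ℕ} (hj : 2 ≤ j) (hjk : j ≤ k - 1)
    {T : Finset V} (hT : T ∈ F.toPartFam.cross j) {b : ℕ} (hb : 1 ≤ b) (hba : b ≤ a j) :
    ∃ T' ∈ F.toPartFam.cross j, F.addrOf (j - 1) T' = F.addrOf (j - 1) T ∧ F.lbl j T' = b := by
  have hfam := h.1.2.2.2.2.2 j hj hjk
  have hlab := h.2.2.2 j hj hjk
  set P := F.toPartFam.polyCliques j T with hP
  have hPc : P ⊆ F.toPartFam.cross j := hfam.2.2.2.1 T hT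
  have hPa := h.addrOf_eq_of_mem_polyCliques j hj hjk T hT
  have hcard : a j ≤ (P.image (F.lbl j)).card := by
    rw [← hfam.2.2.2.2 T hT, ← hP]
    refine card_le_card_of_surjOn
      (fun b => if hb : ∃ I ∈ P, F.lbl j I = b then F.cls j hb.choose else ∅) ?_
    intro c hc
    obtain ⟨I, hI, rfl⟩ := mem_image.1 (mem_coe.1 hc)
    refine ⟨F.lbl j I, mem_coe.2 (mem_image_of_mem _ hI), ?_⟩
    have hex : ∃ I' ∈ P, F.lbl j I' = F.lbl j I := ⟨I, hI, rfl⟩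
    simp only [dif_pos hex]
    have hs := hex.choose_spec
    refine hlab.2.2 _ (hPc hs.1) _ (hPc hI) ?_ hs.2
    refine h.polyad_eq (by omega) (by omega) (hPc hs.1) (hPc hI) ?_
    rw [hPa _ hs.1, hPa _ hI]
  have himg : P.image (F.lbl j) = Icc 1 (a j) := by
    refine eq_of_subset_of_card_le ?_ (by simpa using hcard)
    intro c hc
    obtain ⟨I, hI, rfl⟩ := mem_image.1 hc
    exact mem_Icc.2 (hlab.1 I (hPc hI))
  obtain ⟨I, hI, hIb⟩ := mem_image.1 (himg ▸ mem_Icc.2 ⟨hb, hba⟩ : b ∈ P.image (F.lbl j))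
  exact ⟨I, hPc hI, hPa I hI, hIb⟩

/-- Every class index is used. -/
lemma LabFam.IsLabeled.exists_vIdx (h : F.IsLabeled k a) {b : ℕ} (hb : 1 ≤ b) (hba : b ≤ a 1) :
    ∃ v ∈ F.gnd, F.vIdx v = b := by
  have hcard : a 1 ≤ (F.gnd.image F.vIdx).card := by
    rw [← h.1.2.2.2.1]
    refine card_le_card_of_surjOn
      (fun b => if hb : ∃ v ∈ F.gnd, F.vIdx v = b then F.vClass hb.choose else ∅) ?_
    intro c hc
    obtain ⟨v, hv, rfl⟩ := mem_image.1 (mem_coe.1 hc)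
    refine ⟨F.vIdx v, mem_coe.2 (mem_image_of_mem _ hv), ?_⟩
    have hex : ∃ v' ∈ F.gnd, F.vIdx v' = F.vIdx v := ⟨v, hv, rfl⟩
    simp only [dif_pos hex]
    exact (h.2.2.1 _ hex.choose_spec.1 _ hv).1 hex.choose_spec.2
  have himg : F.gnd.image F.vIdx = Icc 1 (a 1) := by
    refine eq_of_subset_of_card_le ?_ (by simpa using hcard)
    intro c hc
    obtain ⟨v, hv, rfl⟩ := mem_image.1 hc
    exact mem_Icc.2 (h.2.1 v hv)
  exact mem_image.1 (himg ▸ mem_Icc.2 ⟨hb, hba⟩ : b ∈ F.gnd.image F.vIdx)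

/-- Crossing sets extend to crossing sets of any size up to the number of classes. -/
lemma LabFam.IsLabeled.exists_cross_superset (h : F.IsLabeled k a) {j m : ℕ} {T : Finset V}
    (hT : T ∈ F.toPartFam.cross j) (hjm : j ≤ m) (hm : m ≤ a 1) :
    ∃ K ∈ F.toPartFam.cross m, T ⊆ K := by
  obtain ⟨hTg, hTc, hTi⟩ := h.mem_cross_iff.1 hT
  have hcT : (T.image F.vIdx).card = j := by rw [card_image_of_injOn hTi, hTc]
  obtain ⟨L, hTL, hLa, hLc⟩ := exists_subsuperset_card_eq (s := T.image F.vIdx)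
    (t := Icc 1 (a 1)) (n := m)
    (fun c hc => by
      obtain ⟨v, hv, rfl⟩ := mem_image.1 hc
      exact mem_Icc.2 (h.2.1 v (hTg hv)))
    (by omega) (by simpa using hm)
  have hr : ∀ b ∈ L, ∃ v ∈ F.gnd, F.vIdx v = b ∧ (b ∈ T.image F.vIdx → v ∈ T) := by
    intro b hb
    by_cases hbT : b ∈ T.image F.vIdx
    · obtain ⟨v, hv, hvb⟩ := mem_image.1 hbT
      exact ⟨v, hTg hv, hvb, fun _ => hv⟩
    · obtain ⟨v, hv, hvb⟩ := h.exists_vIdx (mem_Icc.1 (hLa hb)).1 (mem_Icc.1 (hLa hb)).2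
      exact ⟨v, hv, hvb, fun hc => absurd hc hbT⟩
  obtain hL | ⟨b₀, hb₀⟩ := L.eq_empty_or_nonempty
  · have hjm' : j = m := by
      rw [hL, card_empty] at hLc
      omega
    exact ⟨T, hjm' ▸ hT, Subset.rfl⟩
  have : Nonempty V := ⟨(hr b₀ hb₀).choose⟩
  choose! r hrg hri hrT using hr
  refine ⟨L.image r, h.mem_cross_iff.2 ⟨?_, ?_, ?_⟩, ?_⟩
  · intro v hv
    obtain ⟨b, hb, rfl⟩ := mem_image.1 hv
    exact hrg b hb
  · rw [card_image_of_injOn, hLc]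
    intro b hb b' hb' e
    rw [← hri b hb, ← hri b' hb', e]
  · intro v hv w hw e
    obtain ⟨b, hb, rfl⟩ := mem_image.1 (mem_coe.1 hv)
    obtain ⟨b', hb', rfl⟩ := mem_image.1 (mem_coe.1 hw)
    rw [hri b hb, hri b' hb'] at e
    rw [e]
  · intro v hv
    have hb := mem_image_of_mem F.vIdx hv
    refine mem_image.2 ⟨F.vIdx v, hTL hb, ?_⟩
    exact hTi (hrT _ (hTL hb) hb) hv (hri _ (hTL hb))

end Addresses

section Placements

variable {V : Type*} [DecidableEq V] {F : LabFam V} {k : ℕ} {a : ℕ → ℕ}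
  {W : Type*} [Fintype W] [DecidableEq W] {σ : W → ℕ}

/-- The maps sending every `v` to a vertex whose class has index `σ v`. -/
def placements (F : LabFam V) (σ : W → ℕ) : Finset (W → V) :=
  Fintype.piFinset fun v => F.gnd.filter fun u => F.vIdx u = σ v

lemma mem_placements {e : W → V} :
    e ∈ placements F σ ↔ ∀ v, e v ∈ F.gnd ∧ F.vIdx (e v) = σ v := by
  simp [placements, Fintype.mem_piFinset]

lemma placements_injective (hσ : Function.Injective σ) {e : W → V} (he : e ∈ placements F σ) :
    Function.Injective e := by
  intro u v huv
  apply hσ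
  rw [← (mem_placements.1 he u).2, ← (mem_placements.1 he v).2, huv]

lemma placements_eq {e e' : W → V} (hσ : Function.Injective σ) (he : e ∈ placements F σ)
    (he' : e' ∈ placements F σ) {v w : W} (h : e v = e' w) : v = w := by
  apply hσ
  rw [← (mem_placements.1 he v).2, ← (mem_placements.1 he' w).2, h]

lemma image_mem_cross (h : F.IsLabeled k a) (hσ : Function.Injective σ) {e : W → V}
    (he : e ∈ placements F σ) (I : Finset W) : I.image e ∈ F.toPartFam.cross I.card := by
  refine h.mem_cross_iff.2 ⟨?_, card_image_of_injective _ (placements_injective hσ he), ?_⟩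
  · intro v hv
    obtain ⟨w, _, rfl⟩ := mem_image.1 hv
    exact (mem_placements.1 he w).1
  · intro u hu v hv huv
    obtain ⟨u', _, rfl⟩ := mem_image.1 (mem_coe.1 hu)
    obtain ⟨v', _, rfl⟩ := mem_image.1 (mem_coe.1 hv)
    rw [(mem_placements.1 he u').2, (mem_placements.1 he v').2] at huv
    rw [hσ huv]

lemma image_vIdx_image {e : W → V} (he : e ∈ placements F σ) (I : Finset W) :
    (I.image e).image F.vIdx = I.image σ := by
  rw [image_image]
  exact image_congr fun v _ => (mem_placements.1 he v).2

lemma KsetC_subset_cross (i : ℕ) (B : Finset (Finset V)) :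
    KsetC F.gnd (F.toPartFam.cross (i + 1)) i (i + 1) B ⊆ F.gnd.powersetCard (i + 1) := by
  unfold KsetC
  split_ifs
  · exact (filter_subset _ _).trans (filter_subset _ _)
  · exact filter_subset _ _

lemma card_KsetC_le (i : ℕ) (B : Finset (Finset V)) :
    ((KsetC F.gnd (F.toPartFam.cross (i + 1)) i (i + 1) B).card : ℝ)
      ≤ (F.gnd.card : ℝ) ^ (i + 1) := by
  have h1 := card_le_card (KsetC_subset_cross (F := F) i B)
  rw [card_powersetCard] at h1
  exact_mod_cast h1.trans (Nat.choose_le_pow _ _)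

/-- Regularity of `A` with respect to `B` controls `A` on the placements of `J` that extend a fixed
placement `e₀` outside `J` and satisfy a property determined by the proper subsets of `J`. -/
lemma abs_card_fiber_sub_le (h : F.IsLabeled k a) (hσ : Function.Injective σ) {J : Finset W}
    {i : ℕ} (hi : 1 ≤ i) (hJ : J.card = i + 1) {e₀ : W → V} (he₀ : e₀ ∈ placements F σ)
    {good : (W → V) → Prop} [DecidablePred good] {ε δ : ℝ} (hε : 0 ≤ ε) (hδ₀ : 0 ≤ δ) (hδ₁ : δ ≤ 1)
    {A B : Finset (Finset V)}
    (hreg : RegPairC F.gnd (F.toPartFam.cross (i + 1)) i ε δ A B)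
    (hgood : ∀ e ∈ placements F σ, (∀ v ∉ J, e v = e₀ v) →
      (∀ I ⊆ J, I.card = i → ∃ e' ∈ placements F σ, good e' ∧ (∀ v ∉ J, e' v = e₀ v) ∧
        ∀ v ∈ I, e' v = e v) → good e)
    (hB : ∀ e ∈ placements F σ, good e → (∀ v ∉ J, e v = e₀ v) →
      ∀ I ⊆ J, I.card = i → I.image e ∈ B) :
    |((((placements F σ).filter fun e => (∀ v ∉ J, e v = e₀ v) ∧ good e).filter
        fun e => J.image e ∈ A).card : ℝ) -
      δ * (((placements F σ).filter fun e => (∀ v ∉ J, e v = e₀ v) ∧ good e).card : ℝ)|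
      ≤ ε * (F.gnd.card : ℝ) ^ (i + 1) := by
  set G := (placements F σ).filter fun e => (∀ v ∉ J, e v = e₀ v) ∧ good e with hG
  have hGm : ∀ {e}, e ∈ G ↔ e ∈ placements F σ ∧ (∀ v ∉ J, e v = e₀ v) ∧ good e := by
    intro e
    rw [hG, mem_filter]
  set Q := G.biUnion fun e => (J.image e).powersetCard i with hQ
  have hQm : ∀ {T}, T ∈ Q ↔ ∃ e ∈ G, T ⊆ J.image e ∧ T.card = i := by
    intro T
    simp only [hQ, mem_biUnion, mem_powersetCard]
  have hinj : Set.InjOn (fun e : W → V => J.image e) G := by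
    intro e he e' he' hee
    obtain ⟨p, o, -⟩ := hGm.1 (mem_coe.1 he)
    obtain ⟨p', o', -⟩ := hGm.1 (mem_coe.1 he')
    funext v
    by_cases hv : v ∈ J
    · have : e v ∈ J.image e' := by
        have h1 : e v ∈ J.image e := mem_image_of_mem _ hv
        exact (show J.image e = J.image e' from hee) ▸ h1
      obtain ⟨w, _, hw⟩ := mem_image.1 this
      rw [← hw, placements_eq hσ p' p hw]
    · rw [o v hv, o' v hv]
  have hQB : Q ⊆ B := by
    intro T hT
    obtain ⟨e, he, hTJ, hTc⟩ := hQm.1 hT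
    obtain ⟨p, o, g⟩ := hGm.1 he
    obtain ⟨I, hI, rfl⟩ := subset_image_iff.1 hTJ
    refine hB e p g o I hI ?_
    rwa [card_image_of_injective _ (placements_injective hσ p)] at hTc
  have hK : KsetC F.gnd (F.toPartFam.cross (i + 1)) i (i + 1) Q = G.image fun e => J.image e := by
    apply Subset.antisymm
    · intro S hS
      have hS' : S ⊆ F.gnd ∧ S.card = i + 1 ∧ (∀ T ⊆ S, T.card = i → T ∈ Q) ∧
          (i = 1 → Set.InjOn F.vIdx S) := by
        unfold KsetC at hS
        split_ifs at hS with hi1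
        · obtain ⟨hc, hq⟩ := mem_filter.1 hS
          obtain ⟨h1, h2, h3⟩ := h.mem_cross_iff.1 hc
          refine ⟨h1, h2, fun T hT hTc => ?_, fun _ => h3⟩
          obtain ⟨v, rfl⟩ := card_eq_one.1 (hTc.trans hi1)
          exact hq v (singleton_subset_iff.1 hT)
        · obtain ⟨hc, hq⟩ := mem_filter.1 hS
          obtain ⟨h1, h2⟩ := mem_powersetCard.1 hc
          exact ⟨h1, h2, fun T hT hTc => hq T (mem_powersetCard.2 ⟨hT, hTc⟩),
            fun hc => absurd hc hi1⟩
      obtain ⟨hSg, hSc, hSQ, hS1⟩ := hS'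
      have hinjS : Set.InjOn F.vIdx S := by
        by_cases hi1 : i = 1
        · exact hS1 hi1
        intro u hu v hv huv
        obtain ⟨T, huT, hTS, hTc⟩ := exists_subsuperset_card_eq (s := {u, v}) (n := i)
          (t := S) (by simp [insert_subset_iff, mem_coe.1 hu, mem_coe.1 hv])
          (card_le_two.trans (by omega)) (by omega)
        obtain ⟨e, he, hTe, -⟩ := hQm.1 (hSQ T hTS hTc)
        exact (h.mem_cross_iff.1 (image_mem_cross h hσ (hGm.1 he).1 J)).2.2
          (hTe (huT (by simp))) (hTe (huT (by simp))) huv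
      have himg : S.image F.vIdx = J.image σ := by
        refine eq_of_subset_of_card_le ?_ ?_
        · intro b hb
          obtain ⟨v, hv, rfl⟩ := mem_image.1 hb
          obtain ⟨T, hvT, hTS, hTc⟩ := exists_subsuperset_card_eq (n := i)
            (singleton_subset_iff.2 hv) (by simp; omega) (by omega)
          obtain ⟨e, he, hTe, -⟩ := hQm.1 (hSQ T hTS hTc)
          rw [← image_vIdx_image (hGm.1 he).1 J]
          exact mem_image_of_mem _ (hTe (singleton_subset_iff.1 hvT))
        · rw [card_image_of_injective _ hσ, card_image_of_injOn hinjS, hJ, hSc]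
      have hs : ∀ w : {w // w ∈ J}, ∃ v ∈ S, F.vIdx v = σ w := by
        intro w
        have : σ w ∈ S.image F.vIdx := himg ▸ mem_image_of_mem _ w.2
        exact mem_image.1 this
      choose s hsS hsσ using hs
      set e : W → V := fun w => if hw : w ∈ J then s ⟨w, hw⟩ else e₀ w with he
      have heJ : ∀ w (hw : w ∈ J), e w = s ⟨w, hw⟩ := fun w hw => by simp [he, hw]
      have heO : ∀ w ∉ J, e w = e₀ w := fun w hw => by simp [he, hw]
      have hep : e ∈ placements F σ := by
        refine mem_placements.2 fun w => ?_
        by_cases hw : w ∈ J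
        · rw [heJ w hw]
          exact ⟨hSg (hsS _), hsσ _⟩
        · rw [heO w hw]
          exact mem_placements.1 he₀ w
      have heS : J.image e = S := by
        refine eq_of_subset_of_card_le ?_ ?_
        · intro v hv
          obtain ⟨w, hw, rfl⟩ := mem_image.1 hv
          rw [heJ w hw]
          exact hsS _
        · rw [card_image_of_injective _ (placements_injective hσ hep), hJ, hSc]
      refine mem_image.2 ⟨e, hGm.2 ⟨hep, heO, hgood e hep heO fun I hI hIc => ?_⟩, heS⟩
      have hIQ : I.image e ∈ Q := hSQ _ (heS ▸ image_subset_image hI)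
        (by rw [card_image_of_injective _ (placements_injective hσ hep), hIc])
      obtain ⟨e', he', hIe, -⟩ := hQm.1 hIQ
      obtain ⟨p', o', g'⟩ := hGm.1 he'
      refine ⟨e', p', g', o', fun v hv => ?_⟩
      obtain ⟨w, _, hw⟩ := mem_image.1 (hIe (mem_image_of_mem e hv))
      rw [← hw, placements_eq hσ p' hep hw]
    · intro S hS
      obtain ⟨e, he, rfl⟩ := mem_image.1 hS
      have hc : J.image e ∈ F.toPartFam.cross (i + 1) :=
        hJ ▸ image_mem_cross h hσ (hGm.1 he).1 J
      unfold KsetC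
      split_ifs with hi1
      · refine mem_filter.2 ⟨hc, fun v hv => hQm.2 ⟨e, he, singleton_subset_iff.2 hv, ?_⟩⟩
        rw [card_singleton, hi1]
      · refine mem_filter.2 ⟨(mem_filter.1 hc).1, fun T hT => ?_⟩
        obtain ⟨h1, h2⟩ := mem_powersetCard.1 hT
        exact hQm.2 ⟨e, he, h1, h2⟩
  have hKA : A ∩ KsetC F.gnd (F.toPartFam.cross (i + 1)) i (i + 1) Q =
      (G.filter fun e => J.image e ∈ A).image fun e => J.image e := by
    rw [hK]
    ext S
    simp only [mem_inter, mem_image, mem_filter]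
    constructor
    · rintro ⟨hA, e, he, rfl⟩
      exact ⟨e, ⟨he, hA⟩, rfl⟩
    · rintro ⟨e, ⟨he, hA⟩, rfl⟩
      exact ⟨hA, e, he, rfl⟩
  have c1 := card_image_of_injOn hinj
  have c2 : ((G.filter fun e => J.image e ∈ A).image fun e => J.image e).card = _ :=
    card_image_of_injOn (hinj.mono (by
      intro e he
      exact (mem_filter.1 (mem_coe.1 he)).1))
  have hr := hreg Q hQB
  have hle := card_KsetC_le (F := F) i Q
  have hleB := card_KsetC_le (F := F) i B
  rw [hKA, hK, c1, c2] at hr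
  rw [hK, c1] at hle
  have hsub : (((G.filter fun e => J.image e ∈ A).card : ℕ) : ℝ) ≤ G.card := by
    exact_mod_cast card_le_card (filter_subset _ _)
  have hn0 : (0 : ℝ) ≤ ((G.filter fun e => J.image e ∈ A).card : ℝ) := Nat.cast_nonneg _
  by_cases hlarge : ε * ((KsetC F.gnd (F.toPartFam.cross (i + 1)) i (i + 1) B).card : ℝ) ≤ G.card
  · exact (hr hlarge).trans (mul_le_mul_of_nonneg_left hle hε)
  · have h1 := mul_le_mul_of_nonneg_left hleB hε
    have h2 : δ * (G.card : ℝ) ≤ G.card := mul_le_of_le_one_left (Nat.cast_nonneg _) hδ₁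
    have h3 : 0 ≤ δ * (G.card : ℝ) := mul_nonneg hδ₀ (Nat.cast_nonneg _)
    rw [abs_le]
    constructor <;> linarith

/-- Summing an estimate over all ways of fixing a placement outside `J`. -/
lemma abs_card_sub_le_of_fiber {J : Finset W} {good φ : (W → V) → Prop} [DecidablePred good]
    [DecidablePred φ] {ε δ : ℝ} (hε : 0 ≤ ε)
    (hfib : ∀ e₀ ∈ placements F σ,
      |((((placements F σ).filter fun e => (∀ v ∉ J, e v = e₀ v) ∧ good e).filter
          φ).card : ℝ) -
        δ * (((placements F σ).filter fun e => (∀ v ∉ J, e v = e₀ v) ∧ good e).card : ℝ)|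
        ≤ ε * (F.gnd.card : ℝ) ^ J.card) :
    |((((placements F σ).filter good).filter φ).card : ℝ) -
        δ * (((placements F σ).filter good).card : ℝ)|
      ≤ ε * (F.gnd.card : ℝ) ^ Fintype.card W := by
  set r : (W → V) → ({v // v ∉ J} → V) := fun e v => e v with hr
  set R := (placements F σ).image r with hR
  have hRc : (R.card : ℝ) ≤ (F.gnd.card : ℝ) ^ (Fintype.card W - J.card) := by
    have h1 : R ⊆ Fintype.piFinset fun _ => F.gnd := by
      intro ρ hρ
      obtain ⟨e, he, rfl⟩ := mem_image.1 hρ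
      exact Fintype.mem_piFinset.2 fun v => (mem_placements.1 he v).1
    have h2 := card_le_card h1
    rw [Fintype.card_piFinset, prod_const, card_univ] at h2
    have h3 : Fintype.card {v // v ∉ J} = Fintype.card W - J.card := by
      rw [Fintype.card_subtype_compl, Fintype.card_coe]
    rw [h3] at h2
    exact_mod_cast h2
  have hsum : ∀ (p : (W → V) → Prop) [DecidablePred p], ((((placements F σ).filter p).card : ℕ) : ℝ) =
      ∑ ρ ∈ R, ((((placements F σ).filter p).filter fun e => r e = ρ).card : ℝ) := by
    intro p _
    rw [card_eq_sum_card_fiberwise (f := r) (t := R)]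
    · push_cast
      rfl
    · intro e he
      exact mem_coe.2 (mem_image_of_mem _ (mem_filter.1 (mem_coe.1 he)).1)
  rw [filter_filter, hsum, hsum, mul_sum, ← sum_sub_distrib]
  have hJ : J.card ≤ Fintype.card W := card_le_univ J
  calc _ ≤ ∑ ρ ∈ R, ε * (F.gnd.card : ℝ) ^ J.card := by
        refine (abs_sum_le_sum_abs _ _).trans (sum_le_sum fun ρ hρ => ?_)
        obtain ⟨e₀, he₀, rfl⟩ := mem_image.1 hρ
        have heq : ∀ e : W → V, r e = r e₀ ↔ ∀ v ∉ J, e v = e₀ v := by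
          intro e
          simp only [hr, funext_iff, Subtype.forall]
        have h1 := hfib e₀ he₀
        rw [filter_filter] at h1
        rw [filter_filter, filter_filter]
        simp only [heq]
        have e1 : ((placements F σ).filter fun e => (good e ∧ φ e) ∧ ∀ v ∉ J, e v = e₀ v) =
            (placements F σ).filter fun e => ((∀ v ∉ J, e v = e₀ v) ∧ good e) ∧ φ e :=
          filter_congr fun e _ => by tauto
        have e2 : ((placements F σ).filter fun e => good e ∧ ∀ v ∉ J, e v = e₀ v) =
            (placements F σ).filter fun e => (∀ v ∉ J, e v = e₀ v) ∧ good e :=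
          filter_congr fun e _ => by tauto
        rw [e1, e2]
        exact h1
    _ = R.card * (ε * (F.gnd.card : ℝ) ^ J.card) := by rw [sum_const, nsmul_eq_mul]
    _ ≤ (F.gnd.card : ℝ) ^ (Fintype.card W - J.card) * (ε * (F.gnd.card : ℝ) ^ J.card) := by
        gcongr
    _ = ε * (F.gnd.card : ℝ) ^ Fintype.card W := by
        rw [mul_left_comm, ← pow_add, Nat.sub_add_cancel hJ]

omit [DecidableEq V] in
/-- Removing constraints one at a time, largest index sets first. -/
lemma abs_card_sub_prod_le {E : Finset (W → V)} {𝒮 : Finset (Finset W)}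
    {f : Finset W → (W → V) → Prop} {δ : Finset W → ℝ} {η : ℝ}
    (hδ₀ : ∀ J ∈ 𝒮, 0 ≤ δ J) (hδ₁ : ∀ J ∈ 𝒮, δ J ≤ 1)
    (hstep : ∀ S ⊆ 𝒮, ∀ J ∈ 𝒮, J ∉ S → (∀ J' ∈ S, J'.card ≤ J.card) →
      (∀ J' ∈ 𝒮, J'.card < J.card → J' ∈ S) →
      |(((E.filter fun e => ∀ J' ∈ S, f J' e).filter fun e => f J e).card : ℝ) -
        δ J * ((E.filter fun e => ∀ J' ∈ S, f J' e).card : ℝ)| ≤ η) :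
    |((E.filter fun e => ∀ J ∈ 𝒮, f J e).card : ℝ) - (∏ J ∈ 𝒮, δ J) * E.card|
      ≤ 𝒮.card * η := by
  suffices H : ∀ m, ∀ S ⊆ 𝒮, S.card = m →
      (∀ J ∈ S, ∀ J' ∈ 𝒮, J'.card < J.card → J' ∈ S) →
      |((E.filter fun e => ∀ J ∈ S, f J e).card : ℝ) - (∏ J ∈ S, δ J) * E.card| ≤ m * η from
    H _ 𝒮 Subset.rfl rfl fun _ _ _ h _ => h
  intro m
  induction m with
  | zero =>
    intro S _ hS _
    rw [card_eq_zero.1 hS]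
    simp
  | succ m ih =>
    intro S hS hSm hdown
    obtain ⟨J, hJS, hmax⟩ := exists_max_image S card (card_pos.1 (by omega))
    have h1 := ih (S.erase J) ((erase_subset _ _).trans hS) (by rw [card_erase_of_mem hJS, hSm]; rfl)
      (fun J₁ hJ₁ J' hJ' hlt => by
        have hm := hmax J₁ (mem_of_mem_erase hJ₁)
        refine mem_erase.2 ⟨?_, hdown J₁ (mem_of_mem_erase hJ₁) J' hJ' hlt⟩
        rintro rfl
        omega)
    have h2 := hstep (S.erase J) ((erase_subset _ _).trans hS) J (hS hJS) (notMem_erase _ _)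
      (fun J' hJ' => hmax J' (mem_of_mem_erase hJ'))
      (fun J' hJ' hlt => mem_erase.2 ⟨by rintro rfl; omega, hdown J hJS J' hJ' hlt⟩)
    have h3 : (E.filter fun e => ∀ J' ∈ S, f J' e) =
        (E.filter fun e => ∀ J' ∈ S.erase J, f J' e).filter fun e => f J e := by
      ext e
      simp only [mem_filter, mem_erase]
      constructor
      · rintro ⟨he, hf⟩
        exact ⟨⟨he, fun J' hJ' => hf J' hJ'.2⟩, hf J hJS⟩
      · rintro ⟨⟨he, hf⟩, hJ⟩
        refine ⟨he, fun J' hJ' => ?_⟩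
        by_cases hc : J' = J
        · exact hc ▸ hJ
        · exact hf J' ⟨hc, hJ'⟩
    rw [h3, ← mul_prod_erase S δ hJS]
    set x : ℝ := (((E.filter fun e => ∀ J' ∈ S.erase J, f J' e).filter fun e => f J e).card : ℝ)
    set y : ℝ := ((E.filter fun e => ∀ J' ∈ S.erase J, f J' e).card : ℝ)
    set z : ℝ := (∏ J ∈ S.erase J, δ J) * E.card
    have h4 : x - δ J * (∏ J ∈ S.erase J, δ J) * E.card = (x - δ J * y) + δ J * (y - z) := by
      simp only [z]
      ring
    rw [h4]
    refine (abs_add_le _ _).trans ?_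
    have h5 : |δ J * (y - z)| ≤ |y - z| := by
      rw [abs_mul, abs_of_nonneg (hδ₀ J (hS hJS))]
      exact mul_le_of_le_one_left (abs_nonneg _) (hδ₁ J (hS hJS))
    push_cast
    linarith

end Placements

section Constraints

variable {V : Type*} [DecidableEq V] {F : LabFam V} {k l : ℕ} {a : ℕ → ℕ}
  {W : Type} [Fintype W] [DecidableEq W] {σ : W → ℕ}

lemma filter_image_placement (hσ : Function.Injective σ) {e : W → V} (he : e ∈ placements F σ)
    {I I' : Finset W} (hI : I' ⊆ I) :
    ((I.image e).filter fun v => F.vIdx v ∈ I'.image σ) = I'.image e := by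
  ext v
  simp only [mem_filter, mem_image]
  constructor
  · rintro ⟨⟨w, _, rfl⟩, u, hu, huw⟩
    rw [(mem_placements.1 he w).2] at huw
    exact ⟨u, hu, by rw [hσ huw]⟩
  · rintro ⟨w, hw, rfl⟩
    exact ⟨⟨w, hI hw, rfl⟩, w, hw, ((mem_placements.1 he w).2).symm⟩

/-- The address of a placed set is the restriction of `x` when all labels agree with `x`. -/
lemma addrOf_image_placement (hσ : Function.Injective σ) {e : W → V} (he : e ∈ placements F σ)
    {x : Addr} {I : Finset W} {i : ℕ}
    (hlab : ∀ I' ⊆ I, 2 ≤ I'.card → I'.card ≤ i →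
      F.lbl I'.card (I'.image e) = x.2 (I'.image σ)) :
    F.addrOf i (I.image e) = restrictA x i (I.image σ) := by
  refine Prod.ext (image_vIdx_image he I) (funext fun L => ?_)
  simp only [LabFam.addrOf, restrictA, image_vIdx_image he I]
  by_cases hL : L ⊆ I.image σ ∧ 2 ≤ L.card ∧ L.card ≤ i
  · rw [if_pos hL, if_pos hL]
    obtain ⟨I', hI', rfl⟩ := subset_image_iff.1 hL.1
    have hc : (I'.image σ).card = I'.card := card_image_of_injective _ hσ
    rw [hc] at hL ⊢
    rw [filter_image_placement hσ he hI', hlab I' hI' hL.2.1 hL.2.2]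
  · rw [if_neg hL, if_neg hL]

lemma LabFam.IsLabeled.mem_polyad (h : F.IsLabeled k a) {i m : ℕ} (hi : 1 ≤ i) (hik : i ≤ k - 1)
    {T M : Finset V} (hT : T ∈ F.toPartFam.cross m) (hM : M ⊆ T) (hMc : M.card = i) :
    M ∈ F.toPartFam.polyad i T := by
  unfold PartFam.polyad
  split_ifs with hi1
  · obtain ⟨v, rfl⟩ := card_eq_one.1 (hMc.trans hi1)
    have hv := hM (mem_singleton_self v)
    refine mem_image_of_mem _ (mem_sup.2 ⟨v, hv, h.1.1 v ((h.mem_cross_iff.1 hT).1 hv)⟩)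
  · refine mem_sup.2 ⟨M, mem_powersetCard.2 ⟨hM, hMc⟩, ?_⟩
    exact (h.1.2.2.2.2.2 i (by omega) hik).1 M (hMc ▸ h.subset_cross hT hM)

/-- The condition on the placement `e` of the index set `J`: the prescribed label below level `k`
and agreement with `Fg` at level `k`. -/
def constr (F : LabFam V) (H : Finset (Finset V)) (k : ℕ) (Fg : Finset (Finset W)) (x : Addr)
    (σ : W → ℕ) (J : Finset W) (e : W → V) : Prop :=
  if J.card = k then (J.image e ∈ H ↔ J ∈ Fg)
  else F.lbl J.card (J.image e) = x.2 (J.image σ)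

/-- The expected density of `constr`. -/
noncomputable def constrDens (k : ℕ) (a : ℕ → ℕ) (d : Addr → ℝ) (Fg : Finset (Finset W)) (x : Addr)
    (σ : W → ℕ) (J : Finset W) : ℝ :=
  if J.card = k then
    (if J ∈ Fg then d (restrictA x (k - 1) (J.image σ))
      else 1 - d (restrictA x (k - 1) (J.image σ)))
  else 1 / (a J.card : ℝ)

/-- The index sets carrying a condition. -/
def constrSets (W : Type) [Fintype W] [DecidableEq W] (k : ℕ) : Finset (Finset W) :=
  univ.filter fun J => 2 ≤ J.card ∧ J.card ≤ k

lemma mem_constrSets {J : Finset W} : J ∈ constrSets W k ↔ 2 ≤ J.card ∧ J.card ≤ k := by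
  simp [constrSets]

omit [Fintype W] [DecidableEq W] in
lemma constr_congr {H : Finset (Finset V)} {Fg : Finset (Finset W)} {x : Addr} {J : Finset W}
    {e e' : W → V} (hee : ∀ v ∈ J, e v = e' v) :
    constr F H k Fg x σ J e ↔ constr F H k Fg x σ J e' := by
  have : J.image e = J.image e' := image_congr fun v hv => hee v hv
  simp only [constr, this]

lemma isAddress_restrictA {x : Addr} (hx : IsAddress l (k - 1) a x) (B : Finset ℕ) (hB : B ⊆ x.1)
    (hBc : B.card = k) : IsAddress k (k - 1) a (restrictA x (k - 1) B) := by
  refine ⟨hBc, fun i hi => hx.2.1 i (hB hi), fun L hL h2 hLk => ?_, fun L hL => ?_⟩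
  · simp only [restrictA]
    rw [if_pos ⟨hL, h2, hLk⟩]
    exact hx.2.2.1 L (hL.trans hB) h2 hLk
  · simp only [restrictA] at hL ⊢
    rw [if_neg hL]

lemma restrictA_restrictA (x : Addr) {i j : ℕ} (hij : i ≤ j) {B C : Finset ℕ} (hBC : B ⊆ C) :
    restrictA (restrictA x j C) i B = restrictA x i B := by
  refine Prod.ext rfl (funext fun L => ?_)
  simp only [restrictA]
  by_cases hL : L ⊆ B ∧ 2 ≤ L.card ∧ L.card ≤ i
  · rw [if_pos hL, if_pos hL, if_pos ⟨hL.1.trans hBC, hL.2.1, hL.2.2.trans hij⟩]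
  · rw [if_neg hL, if_neg hL]

/-- A single condition is satisfied with the expected density. -/
lemma abs_card_constr_sub_le {H : Finset (Finset V)} {ε : ℝ} {d : Addr → ℝ}
    (hP : F.IsEquitPartition k a ε d H) (hk : 2 ≤ k) (ha : ∀ i, 1 ≤ i → i ≤ k - 1 → 1 ≤ a i)
    (hε : 0 ≤ ε) (hd : DensityFun k a d) (hσ : Function.Injective σ) {x : Addr}
    (hx : IsAddress l (k - 1) a x) (hxσ : x.1 = univ.image σ) (Fg : Finset (Finset W))
    {S : Finset (Finset W)} (hS : S ⊆ constrSets W k) {J : Finset W} (hJ : J ∈ constrSets W k)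
    (hJS : J ∉ S) (hmax : ∀ J' ∈ S, J'.card ≤ J.card)
    (hlow : ∀ J' ∈ constrSets W k, J'.card < J.card → J' ∈ S) :
    |((((placements F σ).filter fun e => ∀ J' ∈ S, constr F H k Fg x σ J' e).filter
        fun e => constr F H k Fg x σ J e).card : ℝ) -
      constrDens k a d Fg x σ J *
        (((placements F σ).filter fun e => ∀ J' ∈ S, constr F H k Fg x σ J' e).card : ℝ)|
      ≤ ε * (F.gnd.card : ℝ) ^ Fintype.card W := by
  obtain ⟨h, ⟨-, -, hpoly⟩, hdens⟩ := hP
  refine abs_card_sub_le_of_fiber (J := J) hε fun e₀ he₀ => ?_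
  obtain ⟨hJ2, hJk⟩ := mem_constrSets.1 hJ
  obtain ⟨i, hi⟩ : ∃ i, J.card = i + 1 := ⟨J.card - 1, by omega⟩
  have hi1 : 1 ≤ i := by omega
  have hgood : ∀ e ∈ placements F σ, (∀ v ∉ J, e v = e₀ v) →
      (∀ I ⊆ J, I.card = i → ∃ e' ∈ placements F σ,
        (∀ J' ∈ S, constr F H k Fg x σ J' e') ∧ (∀ v ∉ J, e' v = e₀ v) ∧
        ∀ v ∈ I, e' v = e v) → ∀ J' ∈ S, constr F H k Fg x σ J' e := by
    intro e he ho hI J' hJ'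
    have hne : J' ∩ J ≠ J := by
      intro hc
      have hsub : J ⊆ J' := inter_eq_right.1 hc
      exact hJS (eq_of_subset_of_card_le hsub (hmax J' hJ') ▸ hJ')
    have hlt := card_lt_card (inter_subset_right.ssubset_of_ne hne)
    obtain ⟨I, hI', hIJ, hIc⟩ := exists_subsuperset_card_eq (s := J' ∩ J) (t := J) (n := i)
      inter_subset_right (by omega) (by omega)
    obtain ⟨e', -, hg, ho', hIe⟩ := hI I hIJ hIc
    refine (constr_congr fun v hv => ?_).1 (hg J' hJ')
    by_cases hvJ : v ∈ J
    · exact hIe v (hI' (mem_inter.2 ⟨hv, hvJ⟩))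
    · rw [ho v hvJ, ho' v hvJ]
  have hlab : ∀ e : W → V, (∀ J' ∈ S, constr F H k Fg x σ J' e) → ∀ I' ⊆ J, 2 ≤ I'.card →
      I'.card ≤ i → F.lbl I'.card (I'.image e) = x.2 (I'.image σ) := by
    intro e hg I' hI' h2 hc
    have := hg I' (hlow I' (mem_constrSets.2 ⟨h2, by omega⟩) (by omega))
    rwa [constr, if_neg (by omega)] at this
  have hJx : J.image σ ⊆ x.1 := hxσ ▸ image_subset_image (subset_univ J)
  have hJc : (J.image σ).card = i + 1 := by rw [card_image_of_injective _ hσ, hi]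
  rw [hi]
  by_cases hJk' : J.card = k
  · have hik : k = i + 1 := by omega
    subst hik
    have hadr := isAddress_restrictA hx (J.image σ) hJx hJc
    have hreg := hdens _ hadr
    simp only [Nat.add_sub_cancel] at hreg hadr
    have hd01 := hd _ hadr
    have key := abs_card_fiber_sub_le h hσ hi1 hi he₀ hε hd01.1 hd01.2 hreg hgood ?_
    · generalize (placements F σ).filter (fun e => (∀ v ∉ J, e v = e₀ v) ∧
        ∀ J' ∈ S, constr F H (i + 1) Fg x σ J' e) = G at key ⊢
      have hc : ∀ e, constr F H (i + 1) Fg x σ J e ↔ (J.image e ∈ H ↔ J ∈ Fg) := fun e => by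
        rw [constr, if_pos hJk']
      rw [constrDens, if_pos hJk', Nat.add_sub_cancel]
      by_cases hF : J ∈ Fg
      · rw [if_pos hF, filter_congr (q := fun e => J.image e ∈ H)
          fun e _ => (hc e).trans (iff_true_right hF)]
        exact key
      · rw [if_neg hF, filter_congr (q := fun e => J.image e ∉ H)
          fun e _ => (hc e).trans (iff_false_right hF)]
        rw [← abs_neg] at key
        refine le_of_eq_of_le ?_ key
        congr 1
        rw [← card_filter_add_card_filter_not (s := G) (fun e => J.image e ∈ H)]
        push_cast
        ring
    · intro e he hg _ I hI hIc
      have hIσ : I.image σ ⊆ J.image σ := image_subset_image hI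
      have hIσc : (I.image σ).card = i := by rw [card_image_of_injective _ hσ, hIc]
      unfold LabFam.polyAt
      split_ifs with hi2
      · obtain ⟨w, rfl⟩ := card_eq_one.1 (hIc.trans hi2)
        rw [image_singleton]
        refine mem_image_of_mem _ (mem_filter.2 ⟨(mem_placements.1 he w).1, ?_⟩)
        rw [(mem_placements.1 he w).2]
        exact mem_image_of_mem _ (hI (mem_singleton_self w))
      · refine mem_sup.2 ⟨I.image σ, mem_powersetCard.2 ⟨hIσ, hIσc⟩, ?_⟩
        unfold LabFam.partAt
        rw [if_neg (by omega)]
        refine mem_filter.2 ⟨hIc ▸ image_mem_cross h hσ he I, ?_, ?_⟩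
        · rw [restrictA_restrictA x (by omega) hIσ]
          exact addrOf_image_placement hσ he fun I' hI' h2 hc =>
            hlab e hg I' (hI'.trans hI) h2 (by omega)
        · have := hlab e hg I hI (by omega) (by omega)
          rw [hIc] at this
          rw [this]
          simp only [restrictA]
          rw [if_pos ⟨hIσ, by omega, by omega⟩]
  · have hik : i + 1 ≤ k - 1 := by omega
    by_cases hex : ∃ e₁ ∈ placements F σ,
        (∀ v ∉ J, e₁ v = e₀ v) ∧ ∀ J' ∈ S, constr F H k Fg x σ J' e₁
    · obtain ⟨e₁, he₁, -, hg₁⟩ := hex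
      have hcr : ∀ e ∈ placements F σ, J.image e ∈ F.toPartFam.cross (i + 1) :=
        fun e he => hi ▸ image_mem_cross h hσ he J
      have hb := hx.2.2.1 (J.image σ) hJx (by omega) (by omega)
      rw [hJc] at hb
      obtain ⟨T, hT, hTa, hTl⟩ := h.exists_lbl (by omega) hik (hcr e₁ he₁) hb.1 hb.2
      obtain ⟨K, hK, hTK⟩ := h.exists_cross_superset hT (by omega) h.1.2.2.2.2.1
      have hTd := h.mem_cross_iff.1 hT
      have hreg := hpoly K hK (i + 1) (by omega) hik T (mem_powersetCard.2 ⟨hTK, hTd.2.1⟩)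
      simp only [Nat.add_sub_cancel] at hreg hTa
      have haddr : ∀ e ∈ placements F σ, (∀ J' ∈ S, constr F H k Fg x σ J' e) →
          F.addrOf i (J.image e) = F.addrOf i T := by
        intro e he hg
        rw [hTa, addrOf_image_placement hσ he (hlab e hg),
          addrOf_image_placement hσ he₁ (hlab e₁ hg₁)]
      have ha1 : (1 : ℝ) ≤ a (i + 1) := by exact_mod_cast ha (i + 1) (by omega) hik
      have key := abs_card_fiber_sub_le h hσ hi1 hi he₀ hε (by positivity)
        ((div_le_one (by linarith)).2 ha1) hreg hgood ?_
      · have hA : ∀ e ∈ (placements F σ).filter fun e => (∀ v ∉ J, e v = e₀ v) ∧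
            ∀ J' ∈ S, constr F H k Fg x σ J' e,
            (constr F H k Fg x σ J e ↔ J.image e ∈ F.toPartFam.polyad (i + 1) K) := by
          intro e he
          obtain ⟨he, -, hg⟩ := mem_filter.1 he
          have hadr := haddr e he hg
          rw [constr, if_neg hJk', hi, PartFam.polyad, if_neg (by omega), mem_sup, ← hTl]
          have hiff := h.addrOf_eq_iff (i := i + 1) (by omega) (hcr e he) hT
          simp only [Nat.add_sub_cancel, hadr, true_and] at hiff
          rw [← hiff]
          constructor
          · intro hl
            exact ⟨T, mem_powersetCard.2 ⟨hTK, hTd.2.1⟩,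
              (h.mem_cls_iff (by omega) hik (hcr e he) hT).2 hl⟩
          · rintro ⟨M, hM, hMm⟩
            obtain ⟨hMK, hMc⟩ := mem_powersetCard.1 hM
            have hMcr : M ∈ F.toPartFam.cross (i + 1) := hMc ▸ h.subset_cross hK hMK
            have hMa := (h.mem_cls_iff (by omega) hik (hcr e he) hMcr).1 hMm
            have hMT : M.image F.vIdx = T.image F.vIdx :=
              (congrArg Prod.fst hMa).symm.trans (congrArg Prod.fst hadr)
            have hMeq : M = T := by
              refine eq_of_subset_of_card_le (fun v hv => ?_) (by omega)
              have : F.vIdx v ∈ T.image F.vIdx := hMT ▸ mem_image_of_mem _ hv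
              obtain ⟨w, hw, hwv⟩ := mem_image.1 this
              rwa [← (h.mem_cross_iff.1 hK).2.2 (hTK hw) (hMK hv) hwv]
            rw [← hMeq]
            exact hMa
        rw [filter_congr hA, constrDens, if_neg hJk', hi]
        exact key
      · intro e he hg _ I hI hIc
        rw [← h.polyad_eq hi1 (by omega) (hcr e he) hT (haddr e he hg)]
        exact h.mem_polyad hi1 (by omega) (hcr e he) (image_subset_image hI)
          (by rw [card_image_of_injective _ (placements_injective hσ he), hIc])
    · have hem : ((placements F σ).filter fun e => (∀ v ∉ J, e v = e₀ v) ∧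
          ∀ J' ∈ S, constr F H k Fg x σ J' e) = ∅ := by
        rw [filter_eq_empty_iff]
        intro e he hc
        exact hex ⟨e, he, hc⟩
      rw [hem]
      simp only [filter_empty, card_empty, Nat.cast_zero, mul_zero, sub_zero, abs_zero]
      positivity

lemma constrDens_mem_Icc {d : Addr → ℝ} (ha : ∀ i, 1 ≤ i → i ≤ k - 1 → 1 ≤ a i)
    (hd : DensityFun k a d) (hσ : Function.Injective σ) {x : Addr}
    (hx : IsAddress l (k - 1) a x) (hxσ : x.1 = univ.image σ) (Fg : Finset (Finset W))
    {J : Finset W} (hJ : J ∈ constrSets W k) :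
    0 ≤ constrDens k a d Fg x σ J ∧ constrDens k a d Fg x σ J ≤ 1 := by
  obtain ⟨hJ2, hJk⟩ := mem_constrSets.1 hJ
  unfold constrDens
  by_cases hc : J.card = k
  · have := hd _ (isAddress_restrictA hx (J.image σ)
      (hxσ ▸ image_subset_image (subset_univ J)) (by rw [card_image_of_injective _ hσ, hc]))
    rw [if_pos hc]
    split_ifs
    · exact this
    · constructor <;> linarith
  · rw [if_neg hc]
    have ha1 : (1 : ℝ) ≤ a J.card := by exact_mod_cast ha J.card (by omega) (by omega)
    exact ⟨by positivity, (div_le_one (by linarith)).2 ha1⟩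

lemma prod_constrDens (hk : 2 ≤ k) (hl : Fintype.card W = l) (d : Addr → ℝ)
    (hσ : Function.Injective σ) {x : Addr} (hxσ : x.1 = univ.image σ) (Fg : Finset (Finset W)) :
    ∏ J ∈ constrSets W k, constrDens k a d Fg x σ J = ICs Fg k l a d x σ := by
  have hmaps : ∀ J ∈ constrSets W k, J.card ∈ Icc 2 k := fun J hJ =>
    mem_Icc.2 (mem_constrSets.1 hJ)
  have hfil : ∀ j ∈ Icc 2 k, (constrSets W k).filter (fun J => J.card = j) =
      powersetCard j univ := by
    intro j hj
    rw [mem_Icc] at hj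
    ext J
    simp only [mem_filter, mem_constrSets, mem_powersetCard, subset_univ, true_and]
    omega
  rw [← prod_fiberwise_of_maps_to hmaps]
  have hIcc : Icc 2 k = insert k (Icc 2 (k - 1)) := by
    ext j
    simp only [mem_Icc, mem_insert]
    omega
  rw [hIcc, prod_insert (by simp only [mem_Icc]; omega), ICs]
  congr 1
  · rw [hfil k (by simp [hk]), hxσ]
    refine prod_bij (fun J _ => J.image σ) ?_ ?_ ?_ ?_
    · intro J hJ
      obtain ⟨-, hJc⟩ := mem_powersetCard.1 hJ
      exact mem_powersetCard.2 ⟨image_subset_image (subset_univ J),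
        by rw [card_image_of_injective _ hσ, hJc]⟩
    · intro J _ J' _ hJJ
      exact image_injective hσ hJJ
    · intro B hB
      obtain ⟨hB1, hBc⟩ := mem_powersetCard.1 hB
      obtain ⟨J, -, rfl⟩ := subset_image_iff.1 hB1
      rw [card_image_of_injective _ hσ] at hBc
      exact ⟨J, mem_powersetCard.2 ⟨subset_univ J, hBc⟩, rfl⟩
    · intro J hJ
      obtain ⟨-, hJc⟩ := mem_powersetCard.1 hJ
      have : (∃ A ∈ Fg, A.image σ = J.image σ) ↔ J ∈ Fg := by
        constructor
        · rintro ⟨A, hA, hAJ⟩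
          rwa [← image_injective hσ hAJ]
        · intro hJ
          exact ⟨J, hJ, rfl⟩
      simp only [constrDens, if_pos hJc, this]
  · refine prod_congr rfl fun j hj => ?_
    have hj' := mem_Icc.1 hj
    rw [hfil j (mem_Icc.2 ⟨hj'.1, by omega⟩)]
    rw [prod_congr rfl (g := fun _ => 1 / (a j : ℝ)), prod_const, card_powersetCard, card_univ,
      hl, one_div, inv_pow]
    intro J hJ
    obtain ⟨-, hJc⟩ := mem_powersetCard.1 hJ
    rw [constrDens, if_neg (by omega), hJc]

/-- The number of placements realising the address `x` and inducing `Fg` is as predicted. -/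
lemma abs_card_induced_sub_le {H : Finset (Finset V)} {ε : ℝ} {d : Addr → ℝ}
    (hP : F.IsEquitPartition k a ε d H) (hk : 2 ≤ k) (ha : ∀ i, 1 ≤ i → i ≤ k - 1 → 1 ≤ a i)
    (hε : 0 ≤ ε) (hd : DensityFun k a d) (hσ : Function.Injective σ) {x : Addr}
    (hx : IsAddress l (k - 1) a x) (hxσ : x.1 = univ.image σ) (hl : Fintype.card W = l)
    (Fg : Finset (Finset W)) :
    |(((placements F σ).filter fun e => ∀ J ∈ constrSets W k, constr F H k Fg x σ J e).card : ℝ) -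
        ICs Fg k l a d x σ * (placements F σ).card|
      ≤ 2 ^ l * (ε * (F.gnd.card : ℝ) ^ l) := by
  rw [← prod_constrDens hk hl d hσ hxσ Fg]
  have hb := fun J hJ => constrDens_mem_Icc (J := J) ha hd hσ hx hxσ Fg hJ
  refine (abs_card_sub_prod_le (fun J hJ => (hb J hJ).1) (fun J hJ => (hb J hJ).2)
    fun S hS J hJ hJS hmax hlow =>
      abs_card_constr_sub_le hP hk ha hε hd hσ hx hxσ Fg hS hJ hJS hmax hlow).trans ?_
  rw [hl]
  have : ((constrSets W k).card : ℝ) ≤ 2 ^ l := by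
    have h1 := card_le_univ (constrSets W k)
    rw [Fintype.card_finset, hl] at h1
    exact_mod_cast h1
  gcongr

lemma ICs_mem_Icc (hk : 2 ≤ k) {d : Addr → ℝ} (ha : ∀ i, 1 ≤ i → i ≤ k - 1 → 1 ≤ a i)
    (hd : DensityFun k a d) (hσ : Function.Injective σ) {x : Addr}
    (hx : IsAddress l (k - 1) a x) (hxσ : x.1 = univ.image σ) (hl : Fintype.card W = l)
    (Fg : Finset (Finset W)) :
    0 ≤ ICs Fg k l a d x σ ∧ ICs Fg k l a d x σ ≤ 1 := by
  rw [← prod_constrDens hk hl d hσ hxσ Fg]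
  have hb := fun J hJ => constrDens_mem_Icc (J := J) ha hd hσ hx hxσ Fg hJ
  exact ⟨prod_nonneg fun J hJ => (hb J hJ).1,
    prod_le_one (fun J hJ => (hb J hJ).1) fun J hJ => (hb J hJ).2⟩

end Constraints

section InducedMaps

variable {V : Type*} [DecidableEq V] {W : Type} [Fintype W] [DecidableEq W] {k l : ℕ}

/-- The maps from `W` to `U` embedding `Fg` as an induced subgraph of `H`. -/
noncomputable def inducedMaps (U : Finset V) (H : Finset (Finset V)) (k : ℕ)
    (Fg : Finset (Finset W)) : Finset (W → V) :=
  (Fintype.piFinset fun _ : W => U).filter fun e =>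
    Function.Injective e ∧ ∀ A : Finset W, A.card = k → (A.image e ∈ H ↔ A ∈ Fg)

lemma mem_inducedMaps {U : Finset V} {H : Finset (Finset V)} {Fg : Finset (Finset W)} {e : W → V} :
    e ∈ inducedMaps U H k Fg ↔ (∀ w, e w ∈ U) ∧ Function.Injective e ∧
      ∀ A : Finset W, A.card = k → (A.image e ∈ H ↔ A ∈ Fg) := by
  rw [inducedMaps, mem_filter, Fintype.mem_piFinset]

lemma card_fiber_inducedMaps {U : Finset V} {H : Finset (Finset V)} {Fg : Finset (Finset W)}
    (hFg : ∀ A ∈ Fg, A.card = k) {S : Finset V} (hS : S ⊆ U) (hSi : InducedCopy Fg H k S) :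
    ((inducedMaps U H k Fg).filter fun e => univ.image e = S).card = AutCount Fg := by
  obtain ⟨e₀, hinj, himg, hind⟩ := hSi
  rw [AutCount, Nat.card_eq_fintype_card, Fintype.card_subtype]
  symm
  refine card_bij (fun π _ => e₀ ∘ π) ?_ ?_ ?_
  · intro π hπ
    have hπ := (mem_filter.1 hπ).2
    refine mem_filter.2 ⟨mem_inducedMaps.2 ⟨fun w => hS (himg ▸ mem_image_of_mem _ (mem_univ _)),
      hinj.comp π.injective, fun A hA => ?_⟩, ?_⟩
    · rw [← image_image, hind _ (by rw [card_image_of_injective _ π.injective, hA]), hπ A]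
    · rw [← image_image, image_univ_of_surjective π.surjective, himg]
  · intro π _ π' _ hππ
    exact Equiv.ext fun w => hinj (congrFun hππ w)
  · intro e he
    obtain ⟨he, heS⟩ := mem_filter.1 he
    obtain ⟨-, heinj, heind⟩ := mem_inducedMaps.1 he
    have hex : ∀ w, ∃ w', e₀ w' = e w := fun w => by
      have : e w ∈ univ.image e₀ := himg.trans heS.symm ▸ mem_image_of_mem e (mem_univ w)
      obtain ⟨w', -, hw'⟩ := mem_image.1 this
      exact ⟨w', hw'⟩
    choose p hp using hex
    have hpinj : Function.Injective p := fun u v huv => heinj (by rw [← hp u, ← hp v, huv])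
    have hcomp : e₀ ∘ p = e := funext hp
    refine ⟨Equiv.ofBijective p (Finite.injective_iff_bijective.1 hpinj), ?_, hcomp⟩
    refine mem_filter.2 ⟨mem_univ _, fun A => ?_⟩
    rw [Equiv.coe_ofBijective]
    have hcard : (A.image p).card = A.card := card_image_of_injective _ hpinj
    by_cases hA : A.card = k
    · rw [← hind _ (hcard.trans hA), image_image, hcomp, heind A hA]
    · exact iff_of_false (fun hc => hA (hcard ▸ hFg _ hc)) fun hc => hA (hFg _ hc)

lemma card_inducedMaps (U : Finset V) (H : Finset (Finset V)) {Fg : Finset (Finset W)}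
    (hFg : ∀ A ∈ Fg, A.card = k) (hl : Fintype.card W = l) :
    (inducedMaps U H k Fg).card =
      ((U.powersetCard l).filter fun S => InducedCopy Fg H k S).card * AutCount Fg := by
  rw [card_eq_sum_card_fiberwise (f := fun e => univ.image e)
    (t := (U.powersetCard l).filter fun S => InducedCopy Fg H k S)]
  · rw [sum_congr rfl (g := fun _ => AutCount Fg), sum_const, smul_eq_mul]
    intro S hS
    obtain ⟨hS, hSi⟩ := mem_filter.1 hS
    exact card_fiber_inducedMaps hFg (mem_powersetCard.1 hS).1 hSi
  · intro e he
    obtain ⟨heU, hinj, hind⟩ := mem_inducedMaps.1 (mem_coe.1 he)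
    refine mem_coe.2 (mem_filter.2 ⟨mem_powersetCard.2 ⟨?_, ?_⟩, e, hinj, rfl, hind⟩)
    · exact image_subset_iff.2 fun w _ => heU w
    · rw [card_image_of_injective _ hinj, card_univ, hl]

lemma autCount_pos (Fg : Finset (Finset W)) : 0 < AutCount Fg := by
  have : Nonempty {π : W ≃ W // ∀ A : Finset W, A.image π ∈ Fg ↔ A ∈ Fg} :=
    ⟨⟨Equiv.refl W, fun A => by simp⟩⟩
  exact Nat.card_pos

/-- Few maps send two points of `W` to the same class. -/
lemma card_not_injective_comp_le (U : Finset V) (f : V → ℕ) {m : ℕ}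
    (hm : ∀ i, (U.filter fun v => f v = i).card ≤ m) (hl : Fintype.card W = l) :
    ((Fintype.piFinset fun _ : W => U).filter fun e => ¬ Function.Injective (f ∘ e)).card ≤
      l ^ 2 * (m * U.card ^ (l - 1)) := by
  have hsub : ((Fintype.piFinset fun _ : W => U).filter fun e => ¬ Function.Injective (f ∘ e)) ⊆
      (univ : Finset W).offDiag.biUnion fun p =>
        (Fintype.piFinset fun _ : W => U).filter fun e => f (e p.1) = f (e p.2) := by
    intro e he
    obtain ⟨he, hne⟩ := mem_filter.1 he
    simp only [Function.Injective, not_forall] at hne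
    obtain ⟨u, v, huv, hne⟩ := hne
    exact mem_biUnion.2 ⟨(u, v), by simp [hne], mem_filter.2 ⟨he, huv⟩⟩
  refine (card_le_card hsub).trans ((card_biUnion_le_card_mul _ _ (m * U.card ^ (l - 1))
    fun p hp => ?_).trans (Nat.mul_le_mul_right _ ?_))
  · have hne : p.2 ≠ p.1 := ((mem_offDiag.1 hp).2.2).symm
    have h1 := card_le_mul_card_image_of_maps_to
      (s := (Fintype.piFinset fun _ : W => U).filter fun e => f (e p.1) = f (e p.2))
      (f := fun e (w : {w // w ≠ p.1}) => e w)
      (t := Fintype.piFinset fun _ : {w // w ≠ p.1} => U)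
      (fun e he => Fintype.mem_piFinset.2 fun w =>
        Fintype.mem_piFinset.1 (mem_filter.1 he).1 w) m ?_
    · rw [Fintype.card_piFinset, prod_const, card_univ, Fintype.card_subtype_compl,
        Fintype.card_subtype_eq, hl] at h1
      exact h1
    · intro b _
      refine le_trans ?_ (hm (f (b ⟨p.2, hne⟩)))
      refine card_le_card_of_injOn (fun e => e p.1) ?_ ?_
      · intro e he
        obtain ⟨h1, rfl⟩ := mem_filter.1 (mem_coe.1 he)
        obtain ⟨h2, hf⟩ := mem_filter.1 h1
        exact mem_coe.2 (mem_filter.2 ⟨Fintype.mem_piFinset.1 h2 _, hf⟩)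
      · intro e he e' he' hee
        have h1 := (mem_filter.1 (mem_coe.1 he)).2
        have h2 := (mem_filter.1 (mem_coe.1 he')).2
        funext w
        by_cases hw : w = p.1
        · rw [hw]
          exact hee
        · exact congrFun (h1.trans h2.symm) ⟨w, hw⟩
  · rw [offDiag_card, card_univ, hl, sq]
    exact Nat.sub_le _ _

end InducedMaps

section Pairs

variable {V : Type*} [DecidableEq V] {W : Type} [Fintype W] [DecidableEq W] {F : LabFam V}
  {k l t : ℕ} {a : ℕ → ℕ}

/-- The pairs of an address `x` and a bijection from `W` to the index set of `x`. -/
def addrPairs (W : Type) [Fintype W] (l k : ℕ) (a : ℕ → ℕ) : Set (Addr × (W → ℕ)) :=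
  {p | IsAddress l (k - 1) a p.1 ∧ Function.Injective p.2 ∧ p.1.1 = univ.image p.2}

lemma addrPairs_mapsTo (ha : ∀ i, 1 ≤ i → i ≤ k - 1 → a i ≤ t) :
    Set.MapsTo (fun p : Addr × (W → ℕ) => (p.2, fun J : Finset W => p.1.2 (J.image p.2)))
      (addrPairs W l k a)
      ((Fintype.piFinset fun _ : W => range (a 1 + 1)) ×ˢ
        (Fintype.piFinset fun _ : Finset W => range (t + 1)) : Finset _) := by
  rintro ⟨x, σ⟩ ⟨hx, hσ, hxσ⟩
  simp only [coe_product, Set.mem_prod, mem_coe, Fintype.mem_piFinset, mem_range, Nat.lt_succ_iff]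
  refine ⟨fun w => (hx.2.1 _ (hxσ ▸ mem_image_of_mem σ (mem_univ w))).2, fun J => ?_⟩
  by_cases hJ : J.image σ ⊆ x.1 ∧ 2 ≤ (J.image σ).card ∧ (J.image σ).card ≤ k - 1
  · exact (hx.2.2.1 _ hJ.1 hJ.2.1 hJ.2.2).2.trans (ha _ (by omega) hJ.2.2)
  · rw [hx.2.2.2 _ hJ]
    exact Nat.zero_le _

omit [DecidableEq W] in
lemma addrPairs_injOn :
    Set.InjOn (fun p : Addr × (W → ℕ) => (p.2, fun J : Finset W => p.1.2 (J.image p.2)))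
      (addrPairs W l k a) := by
  rintro ⟨x, σ⟩ ⟨hx, hσ, hxσ⟩ ⟨y, τ⟩ ⟨hy, hτ, hyτ⟩ hxy
  obtain ⟨h1, h2⟩ := Prod.mk.inj hxy
  simp only at h1 h2 hxσ hyτ hx hy
  subst h1
  refine Prod.ext (Prod.ext (hxσ.trans hyτ.symm) (funext fun L => ?_)) rfl
  by_cases hL : L ⊆ x.1
  · obtain ⟨J, -, rfl⟩ := subset_image_iff.1 (hxσ ▸ hL)
    exact congrFun h2 J
  · rw [hx.2.2.2 L fun h => hL h.1, hy.2.2.2 L fun h => hL (by rw [hxσ, ← hyτ]; exact h.1)]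

lemma finite_addrPairs (ha : ∀ i, 1 ≤ i → i ≤ k - 1 → a i ≤ t) : (addrPairs W l k a).Finite :=
  Set.Finite.of_injOn (addrPairs_mapsTo ha) addrPairs_injOn (finite_toSet _)

lemma card_addrPairs_le (ha : ∀ i, 1 ≤ i → i ≤ k - 1 → a i ≤ t) (hl : Fintype.card W = l)
    {P : Finset (Addr × (W → ℕ))} (hP : (P : Set (Addr × (W → ℕ))) = addrPairs W l k a) :
    P.card ≤ (a 1 + 1) ^ l * (t + 1) ^ 2 ^ l := by
  refine (card_le_card_of_injOn _ (hP ▸ addrPairs_mapsTo ha) (hP ▸ addrPairs_injOn)).trans ?_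
  rw [card_product, Fintype.card_piFinset, Fintype.card_piFinset]
  simp [Fintype.card_finset, hl]

lemma IC_eq_sum (hl : Fintype.card W = l) (Fg : Finset (Finset W)) (d : Addr → ℝ)
    {P : Finset (Addr × (W → ℕ))} (hP : (P : Set (Addr × (W → ℕ))) = addrPairs W l k a) :
    IC Fg k l a d = (((a 1).choose l : ℝ))⁻¹ * ((AutCount Fg : ℝ)⁻¹ *
      ∑ p ∈ P, ICs Fg k l a d p.1 p.2) := by
  have hPm : ∀ p, p ∈ P ↔ IsAddress l (k - 1) a p.1 ∧ Function.Injective p.2 ∧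
      p.1.1 = univ.image p.2 := fun p => by rw [← mem_coe, hP]; rfl
  have hX : {x : Addr | IsAddress l (k - 1) a x} = ↑(P.image Prod.fst) := by
    ext x
    simp only [Set.mem_ofPred_eq, coe_image, Set.mem_image, mem_coe, hPm]
    constructor
    · intro hx
      have hc : Fintype.card W = Fintype.card x.1 := by rw [hl, Fintype.card_coe, hx.1]
      have f := Fintype.equivOfCardEq hc
      refine ⟨(x, fun w => f w), ⟨hx, Subtype.val_injective.comp f.injective, ?_⟩, rfl⟩
      ext i
      simp only [mem_image, mem_univ, true_and]
      constructor
      · intro hi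
        exact ⟨f.symm ⟨i, hi⟩, by simp⟩
      · rintro ⟨w, rfl⟩
        exact (f w).2
    · rintro ⟨p, hp, rfl⟩
      exact hp.1
  rw [IC, hX, finsum_mem_coe_finset, 
    ← sum_fiberwise_of_maps_to (s := P) (t := P.image Prod.fst) (g := Prod.fst)
      (fun p hp => mem_image_of_mem Prod.fst hp) (fun p => ICs Fg k l a d p.1 p.2)]
  congr 1
  rw [mul_sum]
  refine sum_congr rfl fun x hx => ?_
  obtain ⟨q, hq, rfl⟩ := mem_image.1 hx
  have hq := (hPm q).1 hq
  have hσ : {σ : W → ℕ | Set.BijOn σ Set.univ ↑q.1.1} =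
      ↑((P.filter fun p => p.1 = q.1).image Prod.snd) := by
    ext σ
    simp only [Set.mem_ofPred_eq, coe_image, Set.mem_image, mem_coe, mem_filter, hPm]
    constructor
    · intro hσ
      refine ⟨(q.1, σ), ⟨⟨hq.1, Set.injOn_univ.1 hσ.injOn, ?_⟩, rfl⟩, rfl⟩
      rw [← coe_inj, ← hσ.image_eq, coe_image, coe_univ]
    · rintro ⟨p, ⟨hp, hpq⟩, rfl⟩
      refine Set.BijOn.mk (fun w _ => ?_) hp.2.1.injOn ?_
      · rw [← hpq, hp.2.2]
        exact mem_coe.2 (mem_image_of_mem _ (mem_univ w))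
      · intro i hi
        rw [← hpq, hp.2.2] at hi
        obtain ⟨w, -, hw⟩ := mem_image.1 (mem_coe.1 hi)
        exact ⟨w, Set.mem_univ w, hw⟩
  rw [ICa, hσ, finsum_mem_coe_finset, sum_image]
  · congr 1
    refine sum_congr rfl fun p hp => ?_
    rw [(mem_filter.1 hp).2]
  · intro p hp p' hp' h
    exact Prod.ext ((mem_filter.1 (mem_coe.1 hp)).2.trans (mem_filter.1 (mem_coe.1 hp')).2.symm) h

/-- Every crossing induced map realises exactly one pair of an address and a bijection. -/
lemma card_crossing_inducedMaps (h : F.IsLabeled k a) (hk : 2 ≤ k) (hl : Fintype.card W = l)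
    (H : Finset (Finset V)) (Fg : Finset (Finset W))
    {P : Finset (Addr × (W → ℕ))} (hP : (P : Set (Addr × (W → ℕ))) = addrPairs W l k a) :
    ((inducedMaps F.gnd H k Fg).filter fun e => Function.Injective (F.vIdx ∘ e)).card =
      ∑ p ∈ P, ((placements F p.2).filter fun e =>
        ∀ J ∈ constrSets W k, constr F H k Fg p.1 p.2 J e).card := by
  have hPm : ∀ p, p ∈ P ↔ IsAddress l (k - 1) a p.1 ∧ Function.Injective p.2 ∧
      p.1.1 = univ.image p.2 := fun p => by rw [← mem_coe, hP]; rfl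
  have hlbl : ∀ e : W → V, (∀ w, e w ∈ F.gnd) → Function.Injective (F.vIdx ∘ e) →
      ∀ J : Finset W, 2 ≤ J.card → J.card ≤ k - 1 →
      (F.addrOf (k - 1) (univ.image e)).2 (J.image (F.vIdx ∘ e)) = F.lbl J.card (J.image e) := by
    intro e hg hinj J h2 hJk
    have hpl : e ∈ placements F (F.vIdx ∘ e) := mem_placements.2 fun w => ⟨hg w, rfl⟩
    have hc : (J.image (F.vIdx ∘ e)).card = J.card := card_image_of_injective _ hinj
    simp only [LabFam.addrOf, image_vIdx_image hpl univ]
    rw [if_pos ⟨image_subset_image (subset_univ J), by omega, by omega⟩,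
      filter_image_placement hinj hpl (subset_univ J), hc]
  rw [card_eq_sum_card_fiberwise (f := fun e => (F.addrOf (k - 1) (univ.image e), F.vIdx ∘ e))
    (t := P)]
  · refine sum_congr rfl fun p hp => congrArg card ?_
    obtain ⟨hx, hσ, hxσ⟩ := (hPm p).1 hp
    ext e
    simp only [mem_filter, mem_inducedMaps]
    constructor
    · rintro ⟨⟨⟨hg, -, hind⟩, hinj⟩, rfl⟩
      refine ⟨mem_placements.2 fun w => ⟨hg w, rfl⟩, fun J hJ => ?_⟩
      rw [mem_constrSets] at hJ
      unfold constr
      split_ifs with hJk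
      · exact hind J hJk
      · exact (hlbl e hg hinj J hJ.1 (by omega)).symm
    · rintro ⟨hpl, hcon⟩
      have hpl' := mem_placements.1 hpl
      have hcomp : F.vIdx ∘ e = p.2 := funext fun w => (hpl' w).2
      refine ⟨⟨⟨fun w => (hpl' w).1, placements_injective hσ hpl, fun A hA => ?_⟩, hcomp ▸ hσ⟩,
        Prod.ext ?_ hcomp⟩
      · have := hcon A (mem_constrSets.2 (by omega))
        rwa [constr, if_pos hA] at this
      · simp only
        rw [addrOf_image_placement hσ hpl (x := p.1) (i := k - 1) fun I' _ h2 hI => ?_]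
        · refine Prod.ext hxσ.symm (funext fun L => ?_)
          simp only [restrictA, ← hxσ]
          split_ifs with hL
          · rfl
          · exact (hx.2.2.2 L hL).symm
        · have := hcon I' (mem_constrSets.2 (by omega))
          rwa [constr, if_neg (by omega)] at this
  · intro e he
    obtain ⟨he, hinj⟩ := mem_filter.1 (mem_coe.1 he)
    obtain ⟨hg, -, -⟩ := mem_inducedMaps.1 he
    have hpl : e ∈ placements F (F.vIdx ∘ e) := mem_placements.2 fun w => ⟨hg w, rfl⟩
    have himg : (F.addrOf (k - 1) (univ.image e)).1 = univ.image (F.vIdx ∘ e) :=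
      image_vIdx_image hpl univ
    refine mem_coe.2 ((hPm _).2 ⟨⟨?_, ?_, ?_, ?_⟩, hinj, himg⟩)
    · rw [himg, card_image_of_injective _ hinj, card_univ, hl]
    · intro i hi
      rw [himg] at hi
      obtain ⟨w, -, rfl⟩ := mem_image.1 hi
      exact h.2.1 _ (hg w)
    · intro L hL h2 hLk
      rw [himg] at hL
      obtain ⟨J, -, rfl⟩ := subset_image_iff.1 hL
      rw [card_image_of_injective _ hinj] at h2 hLk ⊢
      rw [hlbl e hg hinj J h2 hLk]
      exact (h.2.2.2 _ h2 hLk).1 _ (image_mem_cross h hinj hpl J)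
    · intro L hL
      rw [himg] at hL
      simp only [LabFam.addrOf, image_vIdx_image hpl univ]
      rw [if_neg hL]

end Pairs

section Estimates

lemma abs_prod_sub_prod_le {ι : Type*} (s : Finset ι) {p q : ι → ℝ}
    (hp : ∀ i ∈ s, |p i| ≤ 1) (hq : ∀ i ∈ s, |q i| ≤ 1) :
    |∏ i ∈ s, p i - ∏ i ∈ s, q i| ≤ ∑ i ∈ s, |p i - q i| := by
  induction s using Finset.cons_induction with
  | empty => simp
  | cons i s his ih =>
    rw [forall_mem_cons] at hp hq
    rw [prod_cons, prod_cons, sum_cons]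
    have h1 : |∏ j ∈ s, q j| ≤ 1 := by
      rw [abs_prod]
      exact prod_le_one (fun _ _ => abs_nonneg _) hq.2
    calc |p i * ∏ j ∈ s, p j - q i * ∏ j ∈ s, q j|
        = |(p i - q i) * ∏ j ∈ s, q j + p i * (∏ j ∈ s, p j - ∏ j ∈ s, q j)| := by
          congr 1
          ring
      _ ≤ |p i - q i| * |∏ j ∈ s, q j| + |p i| * |∏ j ∈ s, p j - ∏ j ∈ s, q j| := by
          rw [← abs_mul, ← abs_mul]
          exact abs_add_le _ _
      _ ≤ |p i - q i| * 1 + 1 * ∑ j ∈ s, |p j - q j| := by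
          gcongr
          · exact hp.1
          · exact ih hp.2 hq.2
      _ = |p i - q i| + ∑ j ∈ s, |p j - q j| := by ring

variable {V : Type*} [DecidableEq V] {W : Type} [Fintype W] [DecidableEq W] {F : LabFam V}
  {k l : ℕ} {a : ℕ → ℕ} {ε : ℝ} {d : Addr → ℝ} {H : Finset (Finset V)}

lemma LabFam.IsEquitPartition.card_class (hP : F.IsEquitPartition k a ε d H) {v : V}
    (hv : v ∈ F.gnd) :
    (F.gnd.filter fun u => F.vIdx u = F.vIdx v).card = F.gnd.card / a 1 ∨
      (F.gnd.filter fun u => F.vIdx u = F.vIdx v).card = F.gnd.card / a 1 + 1 := by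
  obtain ⟨h, ⟨-, hcard, -⟩, -⟩ := hP
  have := h.sup_vClass (singleton_subset_iff.2 hv)
  simp only [sup_singleton, image_singleton, mem_singleton] at this
  rw [← this]
  exact hcard v hv

lemma LabFam.IsEquitPartition.card_class_le (hP : F.IsEquitPartition k a ε d H) (b : ℕ) :
    (F.gnd.filter fun u => F.vIdx u = b).card ≤ F.gnd.card / a 1 + 1 := by
  obtain hb | ⟨v, hv⟩ := (F.gnd.filter fun u => F.vIdx u = b).eq_empty_or_nonempty
  · simp [hb]
  · obtain ⟨hvg, rfl⟩ := mem_filter.1 hv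
    have := hP.card_class hvg
    omega

lemma LabFam.IsEquitPartition.abs_card_class_sub_le (hP : F.IsEquitPartition k a ε d H) {b : ℕ}
    (hb : 1 ≤ b) (hba : b ≤ a 1) :
    |((F.gnd.filter fun u => F.vIdx u = b).card : ℝ) - F.gnd.card / a 1| ≤ 1 := by
  obtain ⟨v, hv, rfl⟩ := hP.1.exists_vIdx hb hba
  have ha1 : (0 : ℝ) < a 1 := by exact_mod_cast lt_of_lt_of_le hb hba
  have h1 : ((F.gnd.card / a 1 : ℕ) : ℝ) ≤ F.gnd.card / a 1 := Nat.cast_div_le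
  have h2 : (F.gnd.card : ℝ) / a 1 < (F.gnd.card / a 1 : ℕ) + 1 := by
    rw [div_lt_iff₀ ha1]
    rw [mul_comm]
    exact_mod_cast Nat.lt_mul_div_succ F.gnd.card (lt_of_lt_of_le hb hba)
  rw [abs_le]
  rcases hP.card_class hv with h | h <;> rw [h] <;> push_cast <;> constructor <;> linarith

lemma LabFam.IsEquitPartition.abs_card_placements_sub_le (hP : F.IsEquitPartition k a ε d H)
    (hl : Fintype.card W = l) {σ : W → ℕ} (hσ : ∀ w, 1 ≤ σ w ∧ σ w ≤ a 1) (hn : 0 < F.gnd.card) :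
    |((placements F σ).card : ℝ) / F.gnd.card ^ l - 1 / a 1 ^ l| ≤ l / F.gnd.card := by
  have hn' : (0 : ℝ) < F.gnd.card := by exact_mod_cast hn
  have e1 : ((placements F σ).card : ℝ) / F.gnd.card ^ l =
      ∏ w : W, ((F.gnd.filter fun u => F.vIdx u = σ w).card : ℝ) / F.gnd.card := by
    rw [placements, Fintype.card_piFinset, prod_div_distrib, prod_const, card_univ, hl]
    push_cast
    rfl
  have e2 : 1 / (a 1 : ℝ) ^ l = ∏ _w : W, 1 / (a 1 : ℝ) := by
    rw [prod_const, card_univ, hl, div_pow, one_pow]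
  rw [e1, e2]
  refine (abs_prod_sub_prod_le _ (fun w _ => ?_) fun w _ => ?_).trans ?_
  · rw [abs_of_nonneg (by positivity), div_le_one hn']
    exact_mod_cast card_filter_le _ _
  · have : (1 : ℝ) ≤ a 1 := by exact_mod_cast (hσ w).1.trans (hσ w).2
    rw [abs_of_nonneg (by positivity), div_le_one (by linarith)]
    exact this
  · refine (sum_le_card_nsmul _ _ (1 / (F.gnd.card : ℝ)) fun w _ => ?_).trans_eq ?_
    · have h1 := hP.abs_card_class_sub_le (hσ w).1 (hσ w).2
      have : (0 : ℝ) < a 1 := by exact_mod_cast lt_of_lt_of_le (hσ w).1 (hσ w).2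
      generalize ((F.gnd.filter fun u => F.vIdx u = σ w).card : ℝ) = c at h1 ⊢
      have h2 : c / F.gnd.card - 1 / a 1 = (c - F.gnd.card / a 1) / F.gnd.card := by
        field_simp
      rw [h2, abs_div, abs_of_pos hn']
      gcongr
    · rw [card_univ, hl, nsmul_eq_mul, mul_one_div]

/-- The density of induced maps is as predicted. -/
lemma LabFam.IsEquitPartition.abs_card_inducedMaps_sub_le (hP : F.IsEquitPartition k a ε d H)
    (hk : 2 ≤ k) (ha : ∀ i, 1 ≤ i → i ≤ k - 1 → 1 ≤ a i) (hε : 0 ≤ ε) (hd : DensityFun k a d)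
    (hl : Fintype.card W = l) (hl1 : 1 ≤ l) (hn : 0 < F.gnd.card) (Fg : Finset (Finset W))
    {P : Finset (Addr × (W → ℕ))} (hPa : (P : Set (Addr × (W → ℕ))) = addrPairs W l k a) :
    |((inducedMaps F.gnd H k Fg).card : ℝ) / F.gnd.card ^ l -
        (∑ p ∈ P, ICs Fg k l a d p.1 p.2) / a 1 ^ l| ≤
      l ^ 2 * (1 / a 1 + 1 / F.gnd.card) + P.card * (2 ^ l * ε + l / F.gnd.card) := by
  have hn' : (0 : ℝ) < F.gnd.card := by exact_mod_cast hn
  have ha1 : (0 : ℝ) < a 1 := by exact_mod_cast ha 1 le_rfl (by omega)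
  set n := F.gnd.card with hnd
  set X := (inducedMaps F.gnd H k Fg).filter fun e => Function.Injective (F.vIdx ∘ e) with hX
  have hsplit : ((inducedMaps F.gnd H k Fg).card : ℝ) = X.card +
      ((inducedMaps F.gnd H k Fg).filter fun e => ¬ Function.Injective (F.vIdx ∘ e)).card := by
    exact_mod_cast (card_filter_add_card_filter_not _).symm
  have hnon : ((((inducedMaps F.gnd H k Fg).filter fun e =>
      ¬ Function.Injective (F.vIdx ∘ e)).card : ℕ) : ℝ) / n ^ l ≤ l ^ 2 * (1 / a 1 + 1 / n) := by
    have h1 := (card_le_card (filter_subset_filter (fun e => ¬ Function.Injective (F.vIdx ∘ e))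
      (filter_subset _ _ : inducedMaps F.gnd H k Fg ⊆ _))).trans
      (card_not_injective_comp_le (W := W) F.gnd F.vIdx hP.card_class_le hl)
    have h2 : ((((inducedMaps F.gnd H k Fg).filter fun e =>
        ¬ Function.Injective (F.vIdx ∘ e)).card : ℕ) : ℝ) ≤
        l ^ 2 * (((n / a 1 : ℕ) + 1) * n ^ (l - 1)) := by
      exact_mod_cast h1
    have h3 : ((n / a 1 : ℕ) : ℝ) ≤ n / a 1 := Nat.cast_div_le
    rw [div_le_iff₀ (by positivity)]
    calc _ ≤ _ := h2
      _ ≤ (l : ℝ) ^ 2 * ((n / a 1 + 1) * n ^ (l - 1)) := by gcongr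
      _ = _ := by
        obtain ⟨m, rfl⟩ : ∃ m, l = m + 1 := ⟨l - 1, by omega⟩
        rw [Nat.add_sub_cancel, pow_succ (n : ℝ) m]
        field_simp
  have hmain : |(X.card : ℝ) / n ^ l - (∑ p ∈ P, ICs Fg k l a d p.1 p.2) / a 1 ^ l| ≤
      P.card * (2 ^ l * ε + l / n) := by
    rw [hX, card_crossing_inducedMaps hP.1 hk hl H Fg hPa, Nat.cast_sum, sum_div, sum_div,
      ← sum_sub_distrib, ← nsmul_eq_mul]
    refine (abs_sum_le_sum_abs _ _).trans (sum_le_card_nsmul _ _ _ fun p hp => ?_)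
    obtain ⟨hx, hσ, hxσ⟩ : p ∈ addrPairs W l k a := hPa ▸ mem_coe.2 hp
    have h1 := abs_card_induced_sub_le hP hk ha hε hd hσ hx hxσ hl Fg
    have h2 := hP.abs_card_placements_sub_le (σ := p.2) hl
      (fun w => hx.2.1 _ (hxσ ▸ mem_image_of_mem _ (mem_univ w))) hn
    obtain ⟨hI0, hI1⟩ := ICs_mem_Icc hk ha hd hσ hx hxσ hl Fg
    rw [← hnd] at h1 h2
    generalize (((placements F p.2).filter fun e =>
        ∀ J ∈ constrSets W k, constr F H k Fg p.1 p.2 J e).card : ℝ) = c at h1 ⊢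
    generalize ((placements F p.2).card : ℝ) = q at h1 h2
    generalize ICs Fg k l a d p.1 p.2 = I at h1 hI0 hI1 ⊢
    have h3 : |c / n ^ l - I * (q / n ^ l)| ≤ 2 ^ l * ε := by
      have : c / n ^ l - I * (q / n ^ l) = (c - I * q) / n ^ l := by ring
      rw [this, abs_div, abs_of_pos (a := (n : ℝ) ^ l) (by positivity),
        div_le_iff₀ (by positivity), mul_assoc]
      exact h1
    have h4 : |I * (q / n ^ l) - I / a 1 ^ l| ≤ l / n := by
      have : I * (q / n ^ l) - I / a 1 ^ l = I * (q / n ^ l - 1 / a 1 ^ l) := by ring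
      rw [this, abs_mul, abs_of_nonneg hI0]
      calc _ ≤ 1 * ((l : ℝ) / n) := by gcongr
        _ = _ := one_mul _
    exact (abs_sub_le _ _ _).trans (add_le_add h3 h4)
  rw [hsplit, add_div]
  have h0 : (0 : ℝ) ≤ (((inducedMaps F.gnd H k Fg).filter fun e =>
      ¬ Function.Injective (F.vIdx ∘ e)).card : ℝ) / n ^ l := by positivity
  rw [abs_le] at hmain ⊢
  constructor <;> linarith [hmain.1, hmain.2]

lemma tendsto_pow_div_choose (l : ℕ) :
    Filter.Tendsto (fun n : ℕ => (n : ℝ) ^ l / n.choose l) Filter.atTop (nhds (l.factorial : ℝ)) := by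
  have hl : (l.factorial : ℝ) ≠ 0 := by exact_mod_cast l.factorial_ne_zero
  have h := (Asymptotics.isEquivalent_iff_tendsto_one ?_).1 (isEquivalent_choose l).symm
  · have h2 := h.const_mul (l.factorial : ℝ)
    rw [mul_one] at h2
    refine h2.congr fun n => ?_
    simp only [Pi.div_apply]
    field_simp
  · filter_upwards [Filter.eventually_ge_atTop l] with n hn
    exact_mod_cast (Nat.choose_pos hn).ne'

lemma abs_mul_div_sub_le {φ M r s L A γ η : ℝ} (hφ0 : 0 ≤ φ) (hφ1 : φ ≤ 1) (hM : 0 ≤ M)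
    (hL : 0 ≤ L) (hA : 1 ≤ A) (hr : |r - L| ≤ γ / 6) (hs : |s - L| ≤ γ / 6)
    (hη : |φ - M| ≤ η) (hη1 : η ≤ 1) (hηL : L * η ≤ γ / 2) :
    |φ * r / A - M * s / A| ≤ γ := by
  have hM2 : M ≤ 2 := by
    have := (abs_le.1 hη).1
    linarith
  have h1 : |φ * r - M * s| ≤ γ := by
    have e : φ * r - M * s = φ * (r - L) + L * (φ - M) + -(M * (s - L)) := by ring
    rw [e]
    refine (abs_add_three _ _ _).trans ?_
    rw [abs_neg, abs_mul, abs_mul, abs_mul, abs_of_nonneg hφ0, abs_of_nonneg hM, abs_of_nonneg hL]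
    have i1 : φ * |r - L| ≤ 1 * (γ / 6) := by gcongr
    have i2 : L * |φ - M| ≤ L * η := by gcongr
    have i3 : M * |s - L| ≤ 2 * (γ / 6) := by gcongr
    linarith
  rw [← sub_div, abs_div, abs_of_nonneg (by linarith : (0 : ℝ) ≤ A)]
  exact (div_le_self (abs_nonneg _) hA).trans h1

end Estimates

/-- Induced counting lemma for hypergraphs satisfying a regularity instance: the proportion
of ℓ-subsets inducing a copy of `F` is predicted by the density function. -/
theorem induced_counting_regularity_instance (eRI : ℕ → ℕ → ℝ) (hERI : GoodERI eRI) :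
    ∀ (γ : ℝ) (k l : ℕ), 0 < γ → 2 ≤ k → k ≤ l →
    ∃ T₀ : ℕ, ∀ t a1 : ℕ, T₀ ≤ t → T₀ ≤ a1 →
    ∃ ε₁ : ℝ, 0 < ε₁ ∧ ∀ ε : ℝ, 0 < ε → ε ≤ ε₁ →
    ∃ n₀ : ℕ, ∀ n : ℕ, n₀ ≤ n →
    ∀ a : ℕ → ℕ, a 1 = a1 → (∀ i, 1 ≤ i → i ≤ k - 1 → 1 ≤ a i ∧ a i ≤ t) →
    ∀ d : Addr → ℝ, RegInstance eRI k ε a d →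
    ∀ (V : Type) [DecidableEq V], ∀ W : Finset V, W.card = n →
    ∀ H : Finset (Finset V), IsKGraph W k H →
    (∃ P : LabFam V, P.gnd = W ∧ P.IsEquitPartition k a ε d H) →
    ∀ (Wf : Type) [Fintype Wf] [DecidableEq Wf], Fintype.card Wf = l →
    ∀ Fg : Finset (Finset Wf), (∀ e ∈ Fg, e.card = k) →
    |(((W.powersetCard l).filter fun S => InducedCopy Fg H k S).card : ℝ) /
        (n.choose l : ℝ) - IC Fg k l a d| ≤ γ := by
  intro γ k l hγ hk hkl
  have hL : (1 : ℝ) ≤ l.factorial := by exact_mod_cast l.factorial_pos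
  obtain ⟨δ, hδ, hδ1, hδγ⟩ : ∃ δ : ℝ, 0 < δ ∧ 4 * δ ≤ 1 ∧ l.factorial * (4 * δ) ≤ γ / 2 := by
    refine ⟨min γ 1 / (8 * l.factorial), by positivity, ?_, ?_⟩
    · rw [← mul_div_assoc, div_le_one (by positivity)]
      have := min_le_right γ 1
      linarith
    · have e : (l.factorial : ℝ) * (4 * (min γ 1 / (8 * l.factorial))) = min γ 1 / 2 := by
        field_simp
        norm_num
      have := min_le_left γ 1
      rw [e]
      linarith
  obtain ⟨R, hR⟩ := Metric.tendsto_atTop.1 (tendsto_pow_div_choose l) (γ / 6) (by positivity)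
  obtain ⟨T, hT⟩ := exists_nat_ge ((l : ℝ) ^ 2 / δ)
  refine ⟨max (max R l) T, fun t a1 _ ha1 => ?_⟩
  have hlarge : ∀ m : ℕ, max (max R l) T ≤ m → 0 < m ∧ l ≤ m ∧ (l : ℝ) ^ 2 * (1 / m) ≤ δ ∧
      |(m : ℝ) ^ l / m.choose l - l.factorial| ≤ γ / 6 := by
    intro m hm
    have hm' : 0 < m := by omega
    have hTm : (T : ℝ) ≤ m := by exact_mod_cast (le_max_right _ _).trans hm
    refine ⟨hm', by omega, ?_, (hR m (by omega)).le⟩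
    rw [mul_one_div, div_le_iff₀ (by exact_mod_cast hm'), mul_comm, ← div_le_iff₀ hδ]
    exact hT.trans hTm
  obtain ⟨K, hK⟩ : ∃ K, K = (a1 + 1) ^ l * (t + 1) ^ 2 ^ l := ⟨_, rfl⟩
  have hK0 : (0 : ℝ) < K := by
    have : 0 < K := hK ▸ by positivity
    exact_mod_cast this
  refine ⟨δ / (K * 2 ^ l), by positivity, fun ε hε hεδ => ?_⟩
  obtain ⟨N, hN⟩ := exists_nat_ge ((K : ℝ) * l / δ)
  refine ⟨max (max (max R l) T) N, fun n hn a ha1' ha d hRI V _ U hU H _ hPex Wf _ _ hl Fg hFg => ?_⟩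
  obtain ⟨F, rfl, hP⟩ := hPex
  subst ha1'
  have haf := finite_addrPairs (W := Wf) (l := l) fun i hi hik => (ha i hi hik).2
  have hPa := haf.coe_toFinset
  have hcard := card_addrPairs_le (fun i hi hik => (ha i hi hik).2) hl hPa
  generalize haf.toFinset = P at hPa hcard
  obtain ⟨ha0, hla, hδa, hra⟩ := hlarge (a 1) ha1
  obtain ⟨hn0, hln, hδn, hrn⟩ := hlarge n ((le_max_left _ _).trans hn)
  have hA : (1 : ℝ) ≤ AutCount Fg := by exact_mod_cast autCount_pos Fg
  have hmain := hP.abs_card_inducedMaps_sub_le hk (fun i hi hik => (ha i hi hik).1) hε.le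
    hRI.2.2.2.2 hl (by omega) (by omega) Fg hPa
  have hcopy := card_inducedMaps F.gnd H hFg hl
  have hle : (inducedMaps F.gnd H k Fg).card ≤ n ^ l := by
    refine (card_filter_le _ _).trans ?_
    rw [Fintype.card_piFinset, prod_const, card_univ, hl, hU]
  have hS : 0 ≤ ∑ p ∈ P, ICs Fg k l a d p.1 p.2 := sum_nonneg fun p hp => by
    obtain ⟨hx, hσ, hxσ⟩ : p ∈ addrPairs Wf l k a := hPa ▸ mem_coe.2 hp
    exact (ICs_mem_Icc hk (fun i hi hik => (ha i hi hik).1) hRI.2.2.2.2 hσ hx hxσ hl Fg).1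
  rw [IC_eq_sum hl Fg d hPa]
  rw [hU] at hmain
  have hn0' : (0 : ℝ) < n := by exact_mod_cast hn0
  have ha0' : (0 : ℝ) < a 1 := by exact_mod_cast ha0
  have hcn : (0 : ℝ) < n.choose l := by exact_mod_cast Nat.choose_pos hln
  have hca : (0 : ℝ) < (a 1).choose l := by exact_mod_cast Nat.choose_pos hla
  have hη : (l : ℝ) ^ 2 * (1 / a 1 + 1 / n) + P.card * (2 ^ l * ε + l / n) ≤ 4 * δ := by
    have hPK : (P.card : ℝ) ≤ K := by
      rw [hK]
      exact_mod_cast hcard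
    have h1 : (K : ℝ) * (2 ^ l * ε) ≤ δ := by
      rwa [← mul_assoc, mul_comm, ← le_div_iff₀ (by positivity)]
    have h2 : (K : ℝ) * (l / n) ≤ δ := by
      have hNn : (N : ℝ) ≤ n := by exact_mod_cast (le_max_right _ _).trans hn
      rw [← mul_div_assoc, div_le_iff₀ hn0', mul_comm δ, ← div_le_iff₀ hδ]
      exact hN.trans hNn
    have h3 : (P.card : ℝ) * (2 ^ l * ε + l / n) ≤ K * (2 ^ l * ε + l / n) := by gcongr
    linarith
  generalize ((F.gnd.powersetCard l).filter fun S => InducedCopy Fg H k S).card = c at hcopy ⊢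
  generalize ∑ p ∈ P, ICs Fg k l a d p.1 p.2 = S at hmain hS ⊢
  have key := abs_mul_div_sub_le (by positivity)
    ((div_le_one (by positivity)).2 (by exact_mod_cast hle)) (by positivity) (by positivity) hA hrn
    hra (hmain.trans hη) hδ1 hδγ
  convert key using 2
  rw [hcopy]
  push_cast
  field_simp

end HypReg
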